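/- arXiv:2303.05337 — 3 statements merged into one kernel-verified Lean document; each statement's English description precedes it below -/
import Mathlib

section
/- Let φ ∈ Γ₀(H) satisfy φ*(H) ⊂ [0,+∞] and (φ*)⁻¹((0,+∞)) ≠ ∅, let s: G → [−∞,+∞] be such that −s ∈ Γ₀(G) and S = s⁻¹((0,+∞)) ≠ ∅, let γ ∈ (0,+∞), and let (x,y) ∈ Ω₃. Then the unique η ∈ [0,+∞) satisfying (−s)_▽( prox_{(γ·φ*(prox_{(η/γ)⊙φ*}(x/γ)))⊙(−s)_▽} y ) + η = 0 equals s(proj_{cl S} y) > 0, and prox_{γ(φ▷s)}(x,y) = ( x − γ·prox_{(s(proj_{cl S} y)/γ)·φ*}(x/γ), proj_{cl S} y ). -/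
open scoped Classical

noncomputable section

/-- Effective domain of an extended-real-valued function. -/
def edom {E : Type*} (f : E → EReal) : Set E := {x | f x < ⊤}

/-- Convexity of an extended-real-valued function, via its epigraph. -/
def ConvexEpi {E : Type*} [AddCommGroup E] [Module ℝ E] (f : E → EReal) : Prop :=
  Convex ℝ {p : E × ℝ | f p.1 ≤ (p.2 : EReal)}

/-- `f ∈ Γ₀(E)`: proper, lower semicontinuous, convex, with values in `(-∞, +∞]`. -/
def IsGamma0 {E : Type*} [AddCommGroup E] [Module ℝ E] [TopologicalSpace E]
    (f : E → EReal) : Prop :=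
  (∃ x, f x ≠ ⊤) ∧ (∀ x, f x ≠ ⊥) ∧ LowerSemicontinuous f ∧ ConvexEpi f

/-- Proximity operator: the (unique, for `f ∈ Γ₀`) minimizer of
`y ↦ f y + ‖x - y‖² / 2`. -/
def prox {E : Type*} [NormedAddCommGroup E] [InnerProductSpace ℝ E]
    (f : E → EReal) (x : E) : E :=
  Classical.epsilon fun p =>
    ∀ y, f p + ((‖x - p‖ ^ 2 / 2 : ℝ) : EReal) ≤ f y + ((‖x - y‖ ^ 2 / 2 : ℝ) : EReal)

/-- Metric projection onto a set. -/
def projC {E : Type*} [NormedAddCommGroup E] (C : Set E) (x : E) : E :=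
  Classical.epsilon fun p => p ∈ C ∧ ∀ y ∈ C, ‖x - p‖ ≤ ‖x - y‖

/-- Fenchel conjugate. -/
def fconj {E : Type*} [NormedAddCommGroup E] [InnerProductSpace ℝ E]
    (f : E → EReal) (y : E) : EReal :=
  ⨆ x, ((inner ℝ x y : ℝ) : EReal) - f x

/-- Plain scalar multiple `ξ·f`. -/
def smulE {E : Type*} (ξ : ℝ) (f : E → EReal) : E → EReal := fun x => (ξ : EReal) * f x

/-- The operation `ξ ⊙ f`: indicator of `cl (dom f)` if `ξ = 0`, and `ξ·f` if `ξ > 0`. -/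
def rscale {E : Type*} [TopologicalSpace E] (ξ : ℝ) (f : E → EReal) : E → EReal :=
  if ξ = 0 then fun x => if x ∈ closure (edom f) then (0 : EReal) else ⊤
  else fun x => (ξ : EReal) * f x

/-- `f^∨`: agrees with `f` where `-∞ < f < 0`, and is `+∞` elsewhere. -/
def pbas {E : Type*} (f : E → EReal) : E → EReal :=
  fun x => if ⊥ < f x ∧ f x < 0 then f x else ⊤

/-- `f^∧`: agrees with `f` where `0 < f < +∞`, and is `+∞` elsewhere. -/
def phaut {E : Type*} (f : E → EReal) : E → EReal :=
  fun x => if 0 < f x ∧ f x < ⊤ then f x else ⊤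

/-- `f_▽ = (f^∨)**`. -/
def basEnv {E : Type*} [NormedAddCommGroup E] [InnerProductSpace ℝ E]
    (f : E → EReal) : E → EReal :=
  fconj (fconj (pbas f))

/-- `f_▲ = (f^∧)**`. -/
def hautEnv {E : Type*} [NormedAddCommGroup E] [InnerProductSpace ℝ E]
    (f : E → EReal) : E → EReal :=
  fconj (fconj (phaut f))

/-- `S = s⁻¹((0, +∞))`. -/
def sdom {G : Type*} (s : G → EReal) : Set G := {v | 0 < s v ∧ s v < ⊤}

/-- The preperspective `φ ⋉ s`, on the Hilbert direct sum `H ⊕ G`. -/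
def prePersp {H G : Type*} [NormedAddCommGroup H] [InnerProductSpace ℝ H]
    [NormedAddCommGroup G] [InnerProductSpace ℝ G]
    (φ : H → EReal) (s : G → EReal) : WithLp 2 (H × G) → EReal := fun q =>
  if 0 < s ((WithLp.equiv 2 (H × G)) q).2 ∧ s ((WithLp.equiv 2 (H × G)) q).2 < ⊤ then
    s ((WithLp.equiv 2 (H × G)) q).2 *
      φ ((s ((WithLp.equiv 2 (H × G)) q).2).toReal⁻¹ • ((WithLp.equiv 2 (H × G)) q).1)
  else ⊤

/-- The perspective `φ ▷ s`: the largest lower semicontinuous convex minorant of the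
preperspective `φ ⋉ s`, on the Hilbert direct sum `H ⊕ G`. -/
def persp {H G : Type*} [NormedAddCommGroup H] [InnerProductSpace ℝ H]
    [NormedAddCommGroup G] [InnerProductSpace ℝ G]
    (φ : H → EReal) (s : G → EReal) : WithLp 2 (H × G) → EReal := fun q =>
  sSup {t : EReal | ∃ g : WithLp 2 (H × G) → EReal,
    LowerSemicontinuous g ∧ ConvexEpi g ∧ (∀ r, g r ≤ prePersp φ s r) ∧ t = g q}

/-- The point `(x, y)` in the Hilbert direct sum `H ⊕ G`. -/
def pairHG {H G : Type*} (x : H) (y : G) : WithLp 2 (H × G) :=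
  (WithLp.equiv 2 (H × G)).symm (x, y)

end
noncomputable section

/-- `Ω₁` of Proposition 4.2. -/
def Omega1 {H G : Type*} [NormedAddCommGroup H] [InnerProductSpace ℝ H]
    [NormedAddCommGroup G] [InnerProductSpace ℝ G]
    (φ : H → EReal) (s : G → EReal) (γ : ℝ) : Set (H × G) :=
  {p | fconj φ (projC (closure (edom (fconj φ))) (γ⁻¹ • p.1)) = 0 ∧
       s (projC (closure (sdom s)) p.2) = 0}

/-- `Ω₂` of Proposition 4.2. -/
def Omega2 {H G : Type*} [NormedAddCommGroup H] [InnerProductSpace ℝ H]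
    [NormedAddCommGroup G] [InnerProductSpace ℝ G]
    (φ : H → EReal) (s : G → EReal) (γ : ℝ) : Set (H × G) :=
  {p | (0 < fconj φ (projC (closure (edom (fconj φ))) (γ⁻¹ • p.1)) ∧
        fconj φ (projC (closure (edom (fconj φ))) (γ⁻¹ • p.1)) < ⊤) ∧
       s (prox (smulE (γ * (fconj φ (projC (closure (edom (fconj φ))) (γ⁻¹ • p.1))).toReal)
            (basEnv fun v => -(s v))) p.2) = 0}

/-- `Ω₃` of Proposition 4.2. -/
def Omega3 {H G : Type*} [NormedAddCommGroup H] [InnerProductSpace ℝ H]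
    [NormedAddCommGroup G] [InnerProductSpace ℝ G]
    (φ : H → EReal) (s : G → EReal) (γ : ℝ) : Set (H × G) :=
  {p | fconj φ (prox (smulE ((s (projC (closure (sdom s)) p.2)).toReal / γ) (fconj φ))
          (γ⁻¹ • p.1)) = 0 ∧
       0 < s (projC (closure (sdom s)) p.2) ∧ s (projC (closure (sdom s)) p.2) < ⊤}

/-- The equation (4.2) for `η` in Theorem 4.1(i). -/
def eta7eq {H G : Type*} [NormedAddCommGroup H] [InnerProductSpace ℝ H]
    [NormedAddCommGroup G] [InnerProductSpace ℝ G]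
    (φ : H → EReal) (s : G → EReal) (γ : ℝ) (x : H) (y : G) (η : ℝ) : Prop :=
  basEnv (fun v => -(s v))
      (prox (rscale (γ * (fconj φ (prox (rscale (η / γ) (fconj φ)) (γ⁻¹ • x))).toReal)
        (basEnv fun v => -(s v))) y) + (η : EReal) = 0

end


section Helpers

set_option linter.unusedSectionVars false

variable {E : Type*} [NormedAddCommGroup E] [InnerProductSpace ℝ E]

lemma aux_epi_closed {f : E → EReal} (h : LowerSemicontinuous f) :
    IsClosed {p : E × ℝ | f p.1 ≤ (p.2 : EReal)} := by
  have h1 := h.isClosed_epigraph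
  have h2 : Continuous (fun p : E × ℝ => (p.1, (p.2 : EReal))) :=
    continuous_fst.prodMk (continuous_coe_real_ereal.comp continuous_snd)
  exact h1.preimage h2

lemma aux_sep [CompleteSpace E] {f : E → EReal} (hf : LowerSemicontinuous f)
    (hc : ConvexEpi f) {x0 : E} {t0 : ℝ} (h0 : f x0 ≤ (t0 : EReal)) {x : E} {t : ℝ}
    (hx : (t : EReal) < f x) :
    ∃ (a : E) (c u : ℝ), 0 ≤ c ∧ inner ℝ a x + c * t < u ∧
      ∀ (y : E) (r : ℝ), f y ≤ (r : EReal) → u < inner ℝ a y + c * r := by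
  obtain ⟨F, u, hF1, hF2⟩ := geometric_hahn_banach_point_closed (x := (x, t)) hc
    (aux_epi_closed hf) (by simpa using hx)
  set F1 : StrongDual ℝ E := F.comp (ContinuousLinearMap.inl ℝ E ℝ) with hF1d
  have hdec : ∀ (y : E) (r : ℝ),
      F (y, r) = inner ℝ ((InnerProductSpace.toDual ℝ E).symm F1) y + F (0, 1) * r := by
    intro y r
    rw [InnerProductSpace.toDual_symm_apply]
    have : ((y, r) : E × ℝ) = (y, 0) + r • ((0 : E), (1 : ℝ)) := by simp
    rw [this, map_add, map_smul]
    simp [hF1d, mul_comm]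
  have hF2' : ∀ (y : E) (r : ℝ), f y ≤ (r : EReal) →
      u < inner ℝ ((InnerProductSpace.toDual ℝ E).symm F1) y + F (0, 1) * r := by
    intro y r h
    rw [← hdec]
    exact hF2 (y, r) h
  refine ⟨(InnerProductSpace.toDual ℝ E).symm F1, F (0, 1), u, ?_, ?_, hF2'⟩
  · by_contra hneg
    push Not at hneg
    set c := F (0, 1)
    set A : ℝ := inner ℝ ((InnerProductSpace.toDual ℝ E).symm F1) x0
    have h1 := hF2' x0 (max t0 ((A - u) / (-c)))
      (h0.trans (EReal.coe_le_coe_iff.2 (le_max_left _ _)))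
    have h2 : (A - u) / (-c) ≤ max t0 ((A - u) / (-c)) := le_max_right _ _
    rw [div_le_iff₀ (by linarith)] at h2
    change u < A + _ at h1
    linarith
  · rw [← hdec]; exact hF1

lemma aux_proper {f : E → EReal} (hf : IsGamma0 f) : ∃ (x0 : E) (t0 : ℝ), f x0 = (t0 : EReal) := by
  obtain ⟨⟨x0, h1⟩, h2, -⟩ := hf
  exact ⟨x0, (f x0).toReal, (EReal.coe_toReal h1 (h2 x0)).symm⟩

lemma aux_minor0 [CompleteSpace E] {f : E → EReal} (hf : IsGamma0 f) :
    ∃ (a : E) (b : ℝ), ∀ (y : E) (r : ℝ), f y ≤ (r : EReal) → inner ℝ a y - b ≤ r := by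
  obtain ⟨x0, t0, h0⟩ := aux_proper hf
  obtain ⟨a, c, u, hc, h1, h2⟩ := aux_sep hf.2.2.1 hf.2.2.2 h0.le (x := x0) (t := t0 - 1)
    (by rw [h0]; exact EReal.coe_lt_coe_iff.2 (by linarith))
  have h3 := h2 x0 t0 h0.le
  have hc' : 0 < c := by nlinarith
  refine ⟨-(c⁻¹ • a), - (u / c), fun y r hr => ?_⟩
  have h4 := h2 y r hr
  rw [inner_neg_left, real_inner_smul_left]
  have : u / c - c⁻¹ * inner ℝ a y ≤ r := by
    rw [div_eq_inv_mul, ← mul_sub, inv_mul_le_iff₀ hc']; linarith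
  linarith

lemma aux_minor [CompleteSpace E] {f : E → EReal} (hf : IsGamma0 f) {x : E} {t : ℝ}
    (hx : (t : EReal) < f x) :
    ∃ (a : E) (b : ℝ), (∀ (y : E) (r : ℝ), f y ≤ (r : EReal) → inner ℝ a y - b ≤ r) ∧
      t < inner ℝ a x - b := by
  obtain ⟨x0, t0, h0⟩ := aux_proper hf
  obtain ⟨a, c, u, hc, h1, h2⟩ := aux_sep hf.2.2.1 hf.2.2.2 h0.le hx
  rcases hc.lt_or_eq with hc' | hc'
  · refine ⟨-(c⁻¹ • a), - (u / c), fun y r hr => ?_, ?_⟩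
    · have h4 := h2 y r hr
      rw [inner_neg_left, real_inner_smul_left]
      have : u / c - c⁻¹ * inner ℝ a y ≤ r := by
        rw [div_eq_inv_mul, ← mul_sub, inv_mul_le_iff₀ hc']; linarith
      linarith
    · rw [inner_neg_left, real_inner_smul_left]
      have : t < u / c - c⁻¹ * inner ℝ a x := by
        rw [div_eq_inv_mul, ← mul_sub, lt_inv_mul_iff₀ hc']; linarith
      linarith
  · subst hc'
    obtain ⟨a', b', h'⟩ := aux_minor0 hf
    simp only [zero_mul, add_zero] at h1 h2
    have hpos : 0 < u - inner ℝ a x := by linarith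
    set k : ℝ := max 0 ((t - (inner ℝ a' x - b')) / (u - inner ℝ a x) + 1) with hk
    have hk0 : 0 ≤ k := le_max_left _ _
    have hk1 : (t - (inner ℝ a' x - b')) / (u - inner ℝ a x) < k :=
      lt_of_lt_of_le (by linarith) (le_max_right _ _)
    rw [div_lt_iff₀ hpos] at hk1
    refine ⟨a' - k • a, b' - k * u, fun y r hr => ?_, ?_⟩
    · rw [inner_sub_left, real_inner_smul_left]
      have h3 := h' y r hr
      have h4 := h2 y r hr
      nlinarith
    · rw [inner_sub_left, real_inner_smul_left]
      nlinarith

lemma aux_fconj_le {f : E → EReal} {a : E} {b : ℝ} (hbot : ∀ y, f y ≠ ⊥)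
    (h : ∀ (y : E) (r : ℝ), f y ≤ (r : EReal) → inner ℝ a y - b ≤ r) :
    fconj f a ≤ (b : EReal) := by
  refine iSup_le fun y => ?_
  by_cases hy : f y = ⊤
  · simp [hy]
  · have h1 := EReal.coe_toReal hy (hbot y)
    have h2 := h y _ h1.ge
    rw [← h1, ← EReal.coe_sub, EReal.coe_le_coe_iff, real_inner_comm]
    linarith

lemma aux_le_fconj (f : E → EReal) (x a : E) :
    ((inner ℝ x a : ℝ) : EReal) - f x ≤ fconj f a :=
  le_iSup (fun x => ((inner ℝ x a : ℝ) : EReal) - f x) x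

lemma aux_biconj_le (f : E → EReal) (x : E) : fconj (fconj f) x ≤ f x := by
  refine iSup_le fun a => ?_
  have h := aux_le_fconj f x a
  rw [real_inner_comm]
  generalize fconj f a = k at *
  generalize f x = l at *
  induction l using EReal.rec with
  | top => simp
  | bot => 
    rw [EReal.coe_sub_bot] at h
    simp [top_le_iff.1 h]
  | coe l =>
    induction k using EReal.rec with
    | top => simp
    | bot => exact absurd (le_bot_iff.1 h) (EReal.coe_ne_bot _)
    | coe k =>
      rw [← EReal.coe_sub, EReal.coe_le_coe_iff] at *
      linarith

lemma aux_FM [CompleteSpace E] {f : E → EReal} (hf : IsGamma0 f) (x : E) :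
    fconj (fconj f) x = f x := by
  refine le_antisymm (aux_biconj_le f x) ?_
  refine EReal.ge_of_forall_gt_iff_ge.1 fun t ht => ?_
  obtain ⟨a, b, h1, h2⟩ := aux_minor hf ht
  have h3 := aux_fconj_le hf.2.1 h1
  have h4 := aux_le_fconj (fconj f) a x
  refine le_trans ?_ h4
  calc (t : EReal) ≤ ((inner ℝ a x - b : ℝ) : EReal) := EReal.coe_le_coe_iff.2 h2.le
    _ = ((inner ℝ a x : ℝ) : EReal) - (b : EReal) := EReal.coe_sub _ _
    _ ≤ _ := EReal.sub_le_sub le_rfl h3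

lemma aux_fconj_anti {f g : E → EReal} (h : ∀ x, f x ≤ g x) (a : E) : fconj g a ≤ fconj f a :=
  iSup_mono fun x => EReal.sub_le_sub le_rfl (h x)

lemma aux_fconj_lsc (f : E → EReal) : LowerSemicontinuous (fconj f) := by
  refine lowerSemicontinuous_iSup fun x => ?_
  generalize f x = l
  induction l using EReal.rec with
  | top => simpa using lowerSemicontinuous_const
  | bot => simpa using lowerSemicontinuous_const
  | coe l =>
    have : Continuous (fun y : E => ((inner ℝ x y - l : ℝ) : EReal)) := by
      refine continuous_coe_real_ereal.comp ?_
      fun_prop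
    simpa [EReal.coe_sub] using this.lowerSemicontinuous

lemma aux_fconj_convex (f : E → EReal) : ConvexEpi (fconj f) := by
  intro p hp q hq a b ha hb hab
  simp only [Set.mem_ofPred_eq] at *
  refine iSup_le fun x => ?_
  have h1 := (aux_le_fconj f x p.1).trans hp
  have h2 := (aux_le_fconj f x q.1).trans hq
  generalize f x = l at *
  induction l using EReal.rec with
  | top => simp
  | bot => rw [EReal.coe_sub_bot] at h1; simp at h1
  | coe l =>
    rw [← EReal.coe_sub, EReal.coe_le_coe_iff] at *
    simp only [Prod.fst_add, Prod.snd_add, Prod.smul_fst, Prod.smul_snd, smul_eq_mul,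
      inner_add_right, real_inner_smul_right]
    have : l = a * l + b * l := by rw [← add_mul, hab, one_mul]
    nlinarith

lemma aux_convex {f : E → EReal} (hf : ConvexEpi f) {u v : E} {r t a b : ℝ}
    (hu : f u ≤ (r : EReal)) (hv : f v ≤ (t : EReal)) (ha : 0 ≤ a) (hb : 0 ≤ b) (hab : a + b = 1) :
    f (a • u + b • v) ≤ ((a * r + b * t : ℝ) : EReal) := 
  hf (x := (u, r)) hu (y := (v, t)) hv ha hb hab

lemma aux_prox_real [CompleteSpace E] {f : E → EReal} (hf : IsGamma0 f) {c : ℝ} (hc : 0 < c)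
    (x : E) : ∃ (p : E) (r : ℝ), f p = (r : EReal) ∧ ∀ (y : E) (t : ℝ), f y ≤ (t : EReal) →
      c * r + ‖x - p‖ ^ 2 / 2 ≤ c * t + ‖x - y‖ ^ 2 / 2 := by
  obtain ⟨x0, t0, h0⟩ := aux_proper hf
  obtain ⟨a, b, hab⟩ := aux_minor0 hf
  set A : Set ℝ := {v | ∃ (y : E) (t : ℝ), f y ≤ (t : EReal) ∧ v = c * t + ‖x - y‖ ^ 2 / 2} with hA
  have hAne : A.Nonempty := ⟨_, x0, t0, h0.le, rfl⟩
  have hAbd : BddBelow A := by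
    refine ⟨c * inner ℝ a x - ‖c • a‖ ^ 2 / 2 - c * b, ?_⟩
    rintro v ⟨y, t, hy, rfl⟩
    have h1 := hab y t hy
    have h2 : 0 ≤ ‖(x - y) - c • a‖ ^ 2 := by positivity
    rw [norm_sub_sq_real, real_inner_smul_right, inner_sub_left, real_inner_comm,
      real_inner_comm a y] at h2
    nlinarith
  set m := sInf A with hm
  have hmin : ∀ (y : E) (t : ℝ), f y ≤ (t : EReal) → m ≤ c * t + ‖x - y‖ ^ 2 / 2 :=
    fun y t h => csInf_le hAbd ⟨y, t, h, rfl⟩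
  have hdist : ∀ (ε : ℝ) (y z : E) (t t' : ℝ), f y ≤ (t : EReal) → f z ≤ (t' : EReal) →
      c * t + ‖x - y‖ ^ 2 / 2 ≤ m + ε → c * t' + ‖x - z‖ ^ 2 / 2 ≤ m + ε →
      ‖y - z‖ ^ 2 ≤ 8 * ε := by
    intro ε y z t t' hy hz h1 h2
    have h3 := aux_convex hf.2.2.2 hy hz (a := 1/2) (b := 1/2) (by norm_num) (by norm_num)
      (by norm_num)
    have h4 := hmin _ _ h3
    have h5 := parallelogram_law_with_norm ℝ (x - y) (x - z)
    have h6 : x - ((1/2 : ℝ) • y + (1/2 : ℝ) • z) = (1/2 : ℝ) • ((x - y) + (x - z)) := by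
      module
    have h7 : (x - y) - (x - z) = -(y - z) := by abel
    rw [h6, norm_smul, mul_pow] at h4
    rw [h7, norm_neg] at h5
    norm_num at h4
    nlinarith
  have hseq : ∀ n : ℕ, ∃ (y : E) (t : ℝ), f y ≤ (t : EReal) ∧
      c * t + ‖x - y‖ ^ 2 / 2 < m + 1 / ((n : ℝ) + 1) := by
    intro n
    obtain ⟨v, ⟨y, t, h1, rfl⟩, h2⟩ := exists_lt_of_csInf_lt hAne
      (show sInf A < m + 1 / ((n : ℝ) + 1) by
        have : 0 < 1 / ((n : ℝ) + 1) := by positivity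
        linarith)
    exact ⟨y, t, h1, h2⟩
  choose y t hy hyt using hseq
  have hmono : ∀ n N : ℕ, N ≤ n → 1 / ((n : ℝ) + 1) ≤ 1 / ((N : ℝ) + 1) := by
    intro n N h
    exact Nat.one_div_le_one_div h
  have hcau : CauchySeq y := by
    refine cauchySeq_of_le_tendsto_0 (fun N : ℕ => Real.sqrt (8 * (1 / ((N : ℝ) + 1)))) ?_ ?_
    · intro n k N hn hk
      rw [dist_eq_norm]
      refine Real.le_sqrt_of_sq_le ?_
      exact hdist _ _ _ _ _ (hy n) (hy k) ((hyt n).le.trans (by linarith [hmono n N hn]))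
        ((hyt k).le.trans (by linarith [hmono k N hk]))
    · have h1 := (tendsto_one_div_add_atTop_nhds_zero_nat (𝕜 := ℝ)).const_mul 8
      have h2 := (Real.continuous_sqrt.tendsto _).comp h1
      simp only [mul_zero, Real.sqrt_zero] at h2
      exact h2
  obtain ⟨p, hp⟩ := cauchySeq_tendsto_of_complete hcau
  have hlim : Filter.Tendsto
      (fun n : ℕ => (y n, (m + 1 / ((n : ℝ) + 1) - ‖x - y n‖ ^ 2 / 2) / c)) Filter.atTop
      (nhds (p, (m + 0 - ‖x - p‖ ^ 2 / 2) / c)) := by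
    refine hp.prodMk_nhds ?_
    refine Filter.Tendsto.div_const ?_ _
    refine Filter.Tendsto.sub ?_ ?_
    · exact tendsto_const_nhds.add tendsto_one_div_add_atTop_nhds_zero_nat
    · exact (((tendsto_const_nhds.sub hp).norm).pow 2).div_const _
  have hpm := (aux_epi_closed hf.2.2.1).mem_of_tendsto hlim (Filter.Eventually.of_forall fun n => by
    simp only [Set.mem_ofPred_eq]
    refine (hy n).trans (EReal.coe_le_coe_iff.2 ?_)
    rw [le_div_iff₀ hc]
    linarith [hyt n])
  simp only [Set.mem_ofPred_eq, add_zero] at hpm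
  have hr := EReal.coe_toReal (ne_top_of_le_ne_top (EReal.coe_ne_top _) hpm) (hf.2.1 p)
  refine ⟨p, (f p).toReal, hr.symm, fun z t' hz => ?_⟩
  rw [← hr, EReal.coe_le_coe_iff, le_div_iff₀ hc] at hpm
  linarith [hmin z t' hz]

lemma aux_prox_spec [CompleteSpace E] {f : E → EReal} (hf : IsGamma0 f) {c : ℝ} (hc : 0 < c)
    (x : E) : ∃ r : ℝ, f (prox (smulE c f) x) = (r : EReal) ∧
      ∀ (y : E) (t : ℝ), f y ≤ (t : EReal) →
      c * r + ‖x - prox (smulE c f) x‖ ^ 2 / 2 ≤ c * t + ‖x - y‖ ^ 2 / 2 := by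
  obtain ⟨p, r, hr, hp⟩ := aux_prox_real hf hc x
  have hex : ∃ p, ∀ y, smulE c f p + ((‖x - p‖ ^ 2 / 2 : ℝ) : EReal)
      ≤ smulE c f y + ((‖x - y‖ ^ 2 / 2 : ℝ) : EReal) := by
    refine ⟨p, fun y => ?_⟩
    by_cases hy : f y = ⊤
    · rw [smulE, smulE, hy, EReal.coe_mul_top_of_pos hc, EReal.top_add_coe]
      exact le_top
    · have h1 := EReal.coe_toReal hy (hf.2.1 y)
      rw [smulE, smulE, hr, ← h1]
      exact_mod_cast hp y _ h1.ge
  have hspec := Classical.epsilon_spec hex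
  change ∀ y, smulE c f (prox (smulE c f) x) + ((‖x - prox (smulE c f) x‖ ^ 2 / 2 : ℝ) : EReal)
      ≤ smulE c f y + ((‖x - y‖ ^ 2 / 2 : ℝ) : EReal) at hspec
  generalize prox (smulE c f) x = w at *
  have hw : f w ≠ ⊤ := by
    intro h
    have := hspec p
    rw [smulE, smulE, h, hr, EReal.coe_mul_top_of_pos hc, EReal.top_add_coe, ← EReal.coe_mul,
      ← EReal.coe_add] at this
    exact EReal.coe_ne_top _ (top_le_iff.1 this)
  have h1 := EReal.coe_toReal hw (hf.2.1 w)
  refine ⟨_, h1.symm, fun y t hy => ?_⟩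
  have h2 := EReal.coe_toReal (ne_top_of_le_ne_top (EReal.coe_ne_top _) hy) (hf.2.1 y)
  have h3 := hspec y
  rw [smulE, smulE, ← h1, ← h2] at h3
  rw [← h2] at hy
  have h4 : c * (f w).toReal + ‖x - w‖ ^ 2 / 2 ≤ c * (f y).toReal + ‖x - y‖ ^ 2 / 2 := by
    exact_mod_cast h3
  have h5 : (f y).toReal ≤ t := by exact_mod_cast hy
  nlinarith

lemma aux_subgrad {f : E → EReal} (hf : ConvexEpi f) {c r : ℝ} {z w : E} (hc : 0 < c)
    (hw : f w = (r : EReal))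
    (h : ∀ (y : E) (t : ℝ), f y ≤ (t : EReal) →
      c * r + ‖z - w‖ ^ 2 / 2 ≤ c * t + ‖z - y‖ ^ 2 / 2) (y : E) (t : ℝ)
    (hy : f y ≤ (t : EReal)) : c * r + inner ℝ (z - w) (y - w) ≤ c * t := by
  have key : ∀ k : ℝ, 0 < k → k < 1 →
      c * r + inner ℝ (z - w) (y - w) - c * t ≤ k * (‖y - w‖ ^ 2 / 2) := by
    intro k hk hk1
    have h1 := h _ _ (aux_convex hf hw.le hy (a := 1 - k) (b := k) (by linarith) hk.le (by ring))
    have h2 : z - ((1 - k) • w + k • y) = (z - w) - k • (y - w) := by module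
    rw [h2, norm_sub_sq_real (z - w) (k • (y - w)), real_inner_smul_right, norm_smul, Real.norm_of_nonneg hk.le] at h1
    have h3 : k * (c * r + inner ℝ (z - w) (y - w) - c * t) ≤ k * (k * (‖y - w‖ ^ 2 / 2)) := by
      nlinarith
    exact le_of_mul_le_mul_left h3 hk
  by_contra hneg
  push Not at hneg
  set d := c * r + inner ℝ (z - w) (y - w) - c * t with hd
  have hdpos : 0 < d := by linarith
  set N := ‖y - w‖ ^ 2 / 2 with hN
  have hN0 : 0 ≤ N := by positivity
  have h1 := key (min (1/2) (d / (2 * (N + 1)))) (by positivity)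
    (lt_of_le_of_lt (min_le_left _ _) (by norm_num))
  have h2 : min (1/2) (d / (2 * (N + 1))) * N ≤ d / (2 * (N + 1)) * N :=
    mul_le_mul_of_nonneg_right (min_le_right _ _) hN0
  have h3 : d / (2 * (N + 1)) * N ≤ d / 2 := by
    rw [div_mul_eq_mul_div, div_le_div_iff₀ (by positivity) (by norm_num)]
    nlinarith
  linarith

lemma aux_projC_spec [CompleteSpace E] {C : Set E} (hne : C.Nonempty) (hcl : IsClosed C)
    (hcv : Convex ℝ C) (x : E) :
    projC C x ∈ C ∧ ∀ w ∈ C, inner ℝ (x - projC C x) (w - projC C x) ≤ 0 := by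
  have hex : ∃ p, p ∈ C ∧ ∀ y ∈ C, ‖x - p‖ ≤ ‖x - y‖ := by
    obtain ⟨v, hv, h⟩ := exists_norm_eq_iInf_of_complete_convex hne hcl.isComplete hcv x
    refine ⟨v, hv, fun y hy => ?_⟩
    rw [h]
    exact ciInf_le ⟨0, by rintro _ ⟨w, rfl⟩; exact norm_nonneg _⟩ (⟨y, hy⟩ : C)
  have hspec := Classical.epsilon_spec hex
  change projC C x ∈ C ∧ ∀ y ∈ C, ‖x - projC C x‖ ≤ ‖x - y‖ at hspec
  refine ⟨hspec.1, (norm_eq_iInf_iff_real_inner_le_zero hcv hspec.1).1 ?_⟩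
  have : Nonempty C := hne.to_subtype
  exact le_antisymm (le_ciInf fun y => hspec.2 y y.2)
    (ciInf_le ⟨0, by rintro _ ⟨w, rfl⟩; exact norm_nonneg _⟩ (⟨_, hspec.1⟩ : C))

/-- quantitative projection inequality -/
lemma aux_proj_ineq {x p w : E} (h : inner ℝ (x - p) (w - p) ≤ 0) :
    ‖x - p‖ ^ 2 + ‖w - p‖ ^ 2 ≤ ‖x - w‖ ^ 2 := by
  have : x - w = (x - p) - (w - p) := by abel
  rw [this, norm_sub_sq_real (x - p) (w - p)]
  linarith

lemma aux_prox_ind {C : Set E} {x p : E} (hp : p ∈ C)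
    (h : ∀ w ∈ C, inner ℝ (x - p) (w - p) ≤ 0) :
    prox (fun v => if v ∈ C then (0 : EReal) else ⊤) x = p := by
  have hex : ∃ p, ∀ y, (if p ∈ C then (0 : EReal) else ⊤) + ((‖x - p‖ ^ 2 / 2 : ℝ) : EReal)
      ≤ (if y ∈ C then (0 : EReal) else ⊤) + ((‖x - y‖ ^ 2 / 2 : ℝ) : EReal) := by
    refine ⟨p, fun y => ?_⟩
    by_cases hy : y ∈ C
    · have := aux_proj_ineq (h y hy)
      simp only [hp, hy, if_true, zero_add, EReal.coe_le_coe_iff]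
      nlinarith [sq_nonneg ‖y - p‖]
    · simp only [hy, if_false, EReal.top_add_coe, le_top]
  have hspec := Classical.epsilon_spec hex
  change ∀ y, (if prox (fun v => if v ∈ C then (0 : EReal) else ⊤) x ∈ C then (0 : EReal) else ⊤)
    + ((‖x - prox (fun v => if v ∈ C then (0 : EReal) else ⊤) x‖ ^ 2 / 2 : ℝ) : EReal)
      ≤ (if y ∈ C then (0 : EReal) else ⊤) + ((‖x - y‖ ^ 2 / 2 : ℝ) : EReal) at hspec
  generalize prox (fun v => if v ∈ C then (0 : EReal) else ⊤) x = q at *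
  have h1 := hspec p
  by_cases hq : q ∈ C
  · simp only [hp, hq, if_true, zero_add, EReal.coe_le_coe_iff] at h1
    have h2 := aux_proj_ineq (h q hq)
    have h3 : ‖q - p‖ ^ 2 ≤ 0 := by linarith
    have h4 : ‖q - p‖ = 0 := by nlinarith [norm_nonneg (q - p)]
    exact sub_eq_zero.1 (norm_eq_zero.1 h4)
  · simp only [hp, hq, if_true, if_false, zero_add, EReal.top_add_coe] at h1
    exact absurd (top_le_iff.1 h1) (EReal.coe_ne_top _)

lemma aux_sdom_iff {s : E → EReal} (hs : IsGamma0 (fun v => -(s v))) (v : E) :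
    v ∈ sdom s ↔ 0 < s v := by
  refine ⟨fun h => h.1, fun h => ⟨h, ?_⟩⟩
  have := hs.2.1 v
  rw [lt_top_iff_ne_top]
  intro h'
  simp [h'] at this

lemma aux_sdom_convex {s : E → EReal} (hs : IsGamma0 (fun v => -(s v))) : Convex ℝ (sdom s) := by
  intro u hu v hv a b ha hb hab
  rw [aux_sdom_iff hs]
  have h1 := EReal.coe_toReal hu.2.ne (ne_bot_of_gt hu.1)
  have h2 := EReal.coe_toReal hv.2.ne (ne_bot_of_gt hv.1)
  have p1 : 0 < (s u).toReal := EReal.toReal_pos hu.1 hu.2.ne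
  have p2 : 0 < (s v).toReal := EReal.toReal_pos hv.1 hv.2.ne
  have h3 := aux_convex hs.2.2.2 (u := u) (v := v) (r := -(s u).toReal) (t := -(s v).toReal)
    (by rw [EReal.coe_neg, h1]) (by rw [EReal.coe_neg, h2]) ha hb hab
  have h4 : a * -(s u).toReal + b * -(s v).toReal < 0 := by
    rcases ha.lt_or_eq with h | h
    · nlinarith [mul_pos h p1, mul_nonneg hb p2.le]
    · subst h
      have : b = 1 := by linarith
      subst this
      linarith
  have h5 : -(s (a • u + b • v)) < 0 := lt_of_le_of_lt h3 (by exact_mod_cast h4)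
  rwa [EReal.neg_lt_comm, neg_zero] at h5

lemma aux_restrict_lsc {X : Type*} [TopologicalSpace X] {C : Set X} (hC : IsClosed C)
    {f : X → EReal} (hf : LowerSemicontinuous f) :
    LowerSemicontinuous (fun v => if v ∈ C then f v else ⊤) := by
  rw [lowerSemicontinuous_iff_isClosed_preimage] at *
  intro t
  by_cases ht : t = ⊤
  · subst ht; simp
  · have : (fun v => if v ∈ C then f v else ⊤) ⁻¹' Set.Iic t = C ∩ f ⁻¹' Set.Iic t := by
      ext v
      by_cases hv : v ∈ C <;> simp [hv, ht]
    rw [this]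
    exact hC.inter (hf t)

lemma aux_restrict_convex {X : Type*} [AddCommGroup X] [Module ℝ X] {C : Set X} (hC : Convex ℝ C)
    {f : X → EReal} (hf : ConvexEpi f) :
    ConvexEpi (fun v => if v ∈ C then f v else ⊤) := by
  have h : {p : X × ℝ | (if p.1 ∈ C then f p.1 else ⊤) ≤ (p.2 : EReal)}
      = {p : X × ℝ | f p.1 ≤ (p.2 : EReal)} ∩ (LinearMap.fst ℝ X ℝ) ⁻¹' C := by
    ext p
    by_cases hv : p.1 ∈ C <;> simp [hv]
  unfold ConvexEpi
  rw [h]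
  exact Convex.inter hf (hC.linear_preimage _)

lemma aux_basEnv [CompleteSpace E] {s : E → EReal} (hs : IsGamma0 (fun v => -(s v)))
    (hS : ∃ v, 0 < s v ∧ s v < ⊤) :
    (∀ v ∈ sdom s, basEnv (fun v => -(s v)) v = -(s v)) ∧
    (∀ v, basEnv (fun v => -(s v)) v < ⊤ → v ∈ closure (sdom s)) ∧
    IsGamma0 (basEnv (fun v => -(s v))) := by
  obtain ⟨v0, hv0⟩ := hS
  have hg : IsGamma0 (fun v => if v ∈ closure (sdom s) then -(s v) else ⊤) := by
    refine ⟨⟨v0, ?_⟩, ?_, ?_, ?_⟩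
    · have : v0 ∈ closure (sdom s) := subset_closure hv0
      simp only [this, if_true]
      have := hv0.1
      intro h
      rw [EReal.neg_eq_top_iff] at h
      simp [h] at this
    · intro v
      by_cases hv : v ∈ closure (sdom s)
      · simpa only [hv, if_true] using hs.2.1 v
      · simp [hv]
    · exact aux_restrict_lsc isClosed_closure hs.2.2.1
    · exact aux_restrict_convex (aux_sdom_convex hs).closure hs.2.2.2
  have hpb : ∀ v ∈ sdom s, pbas (fun v => -(s v)) v = -(s v) := by
    intro v hv
    unfold pbas
    rw [if_pos]
    refine ⟨bot_lt_iff_ne_bot.2 (hs.2.1 v), ?_⟩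
    rw [EReal.neg_lt_comm, neg_zero]; exact hv.1
  have hle : ∀ v, (if v ∈ closure (sdom s) then -(s v) else ⊤) ≤ pbas (fun v => -(s v)) v := by
    intro v
    by_cases hv : v ∈ sdom s
    · rw [hpb v hv, if_pos (subset_closure hv)]
    · have : pbas (fun v => -(s v)) v = ⊤ := by
        unfold pbas
        rw [if_neg]
        rintro ⟨-, h⟩
        rw [EReal.neg_lt_comm, neg_zero] at h
        exact hv ((aux_sdom_iff hs v).2 h)
      rw [this]; exact le_top
  have hge : ∀ v, (if v ∈ closure (sdom s) then -(s v) else ⊤) ≤ basEnv (fun v => -(s v)) v := by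
    intro v
    rw [← aux_FM hg v]
    exact aux_fconj_anti (fun a => aux_fconj_anti hle a) v
  have h1 : ∀ v ∈ sdom s, basEnv (fun v => -(s v)) v = -(s v) := by
    intro v hv
    refine le_antisymm ((aux_biconj_le _ v).trans (hpb v hv).le) ?_
    have := hge v
    rwa [if_pos (subset_closure hv)] at this
  refine ⟨h1, ?_, ⟨v0, ?_⟩, ?_, aux_fconj_lsc _, aux_fconj_convex _⟩
  · intro v hv
    by_contra h
    have h2 := hge v
    rw [if_neg h] at h2
    exact hv.ne (top_le_iff.1 h2)
  · rw [h1 v0 hv0]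
    intro h
    rw [EReal.neg_eq_top_iff] at h
    have := hv0.1
    simp [h] at this
  · intro v h
    have h2 := hge v
    rw [h] at h2
    exact hg.2.1 v (le_bot_iff.1 h2)

end Helpers

/-- Proposition 4.2(iii). -/
theorem stmt13 {H G : Type*} [NormedAddCommGroup H] [InnerProductSpace ℝ H] [CompleteSpace H]
    [NormedAddCommGroup G] [InnerProductSpace ℝ G] [CompleteSpace G]
    (φ : H → EReal) (s : G → EReal) (hφ : IsGamma0 φ)
    (hc1 : ∀ u : H, 0 ≤ fconj φ u)
    (hc2 : ∃ u : H, 0 < fconj φ u ∧ fconj φ u < ⊤)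
    (hs : IsGamma0 (fun v : G => -(s v)))
    (hS : ∃ v : G, 0 < s v ∧ s v < ⊤)
    (γ : ℝ) (hγ : 0 < γ) (x : H) (y : G) (hmem : (x, y) ∈ Omega3 φ s γ) :
    0 < s (projC (closure (sdom s)) y) ∧
    eta7eq φ s γ x y ((s (projC (closure (sdom s)) y)).toReal) ∧
    (∀ η : ℝ, 0 ≤ η → eta7eq φ s γ x y η →
        (η : EReal) = s (projC (closure (sdom s)) y)) ∧
    prox (smulE γ (persp φ s)) (pairHG x y) =
      pairHG
        (x - γ • prox (smulE ((s (projC (closure (sdom s)) y)).toReal / γ) (fconj φ)) (γ⁻¹ • x))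
        (projC (closure (sdom s)) y) := by
  obtain ⟨hw0, hpos, hlt⟩ := hmem
  simp only at hw0 hpos hlt
  obtain ⟨hg1, hg2, hgG⟩ := aux_basEnv hs hS
  have hSne : (closure (sdom s)).Nonempty := hS.elim fun v hv => ⟨v, subset_closure hv⟩
  have hScv : Convex ℝ (closure (sdom s)) := (aux_sdom_convex hs).closure
  obtain ⟨hpC, hpI⟩ := aux_projC_spec hSne isClosed_closure hScv y
  set p := projC (closure (sdom s)) y with hp
  have hpS : p ∈ sdom s := ⟨hpos, hlt⟩
  set σ := (s p).toReal with hσ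
  have hsσ : s p = (σ : EReal) := (EReal.coe_toReal hlt.ne (ne_bot_of_gt hpos)).symm
  have hσpos : 0 < σ := EReal.toReal_pos hpos hlt.ne
  have hgp : basEnv (fun v => -(s v)) p = ((-σ : ℝ) : EReal) := by
    rw [hg1 p hpS, hsσ, EReal.coe_neg]
  have hfG : IsGamma0 (fconj φ) := by
    refine ⟨?_, ?_, aux_fconj_lsc _, aux_fconj_convex _⟩
    · obtain ⟨u, -, hu⟩ := hc2
      exact ⟨u, hu.ne⟩
    · intro u h
      have := hc1 u
      rw [h] at this
      simp at this
  -- the zero-scaled case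
  have hcl : closure (edom (basEnv fun v => -(s v))) = closure (sdom s) := by
    refine Set.Subset.antisymm (closure_minimal (fun v hv => hg2 v hv) isClosed_closure)
      (closure_mono fun v hv => ?_)
    change basEnv (fun v => -(s v)) v < ⊤
    rw [hg1 v hv, lt_top_iff_ne_top]
    intro h
    rw [EReal.neg_eq_top_iff] at h
    have := hv.1
    simp [h] at this
  have hprox0 : prox (rscale 0 (basEnv fun v => -(s v))) y = p := by
    unfold rscale
    rw [if_pos rfl, hcl]
    exact aux_prox_ind hpC hpI
  obtain ⟨r, hr, hwmin⟩ := aux_prox_spec hfG (div_pos hσpos hγ) (γ⁻¹ • x)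
  set w := prox (smulE (σ / γ) (fconj φ)) (γ⁻¹ • x) with hw
  have hr0 : r = 0 := by
    rw [hr] at hw0
    exact_mod_cast hw0
  subst hr0
  have hresc : ∀ c : ℝ, 0 < c → ∀ f : H → EReal, rscale c f = smulE c f := by
    intro c hc f
    unfold rscale
    rw [if_neg hc.ne']
    rfl
  have hresc' : ∀ c : ℝ, 0 < c → ∀ f : G → EReal, rscale c f = smulE c f := by
    intro c hc f
    unfold rscale
    rw [if_neg hc.ne']
    rfl
  refine ⟨hpos, ?_, ?_, ?_⟩
  · unfold eta7eq
    rw [hresc _ (div_pos hσpos hγ), ← hw, hw0, EReal.toReal_zero, mul_zero, hprox0, hgp,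
      ← EReal.coe_add]
    simp
  · intro η hη heq
    rw [hsσ, EReal.coe_eq_coe_iff]
    unfold eta7eq at heq
    set β := γ * (fconj φ (prox (rscale (η / γ) (fconj φ)) (γ⁻¹ • x))).toReal with hβ
    have hβ0 : 0 ≤ β := mul_nonneg hγ.le (EReal.toReal_nonneg (hc1 _))
    have hcase0 : β = 0 → η = σ := by
      intro h
      rw [h, hprox0, hgp, ← EReal.coe_add] at heq
      have : -σ + η = 0 := by exact_mod_cast heq
      linarith
    rcases hβ0.lt_or_eq with hβpos | hβz
    · have hση : σ ≤ η := by
        rw [hresc' _ hβpos] at heq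
        obtain ⟨t, ht, hmin⟩ := aux_prox_spec hgG hβpos y
        have h1 := hmin p (-σ) hgp.le
        have h2 := hg2 _ (by rw [ht]; exact EReal.coe_lt_top t)
        have h3 := aux_proj_ineq (hpI _ h2)
        rw [ht, ← EReal.coe_add] at heq
        have h4 : t + η = 0 := by exact_mod_cast heq
        have h5 : β * t ≤ β * (-σ) := by
          nlinarith [sq_nonneg ‖prox (smulE β (basEnv fun v => -(s v))) y - p‖]
        have h6 := le_of_mul_le_mul_left h5 hβpos
        linarith
      have hηpos : 0 < η := by linarith
      rw [hresc _ (div_pos hηpos hγ)] at hβ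
      obtain ⟨t, ht, hmin⟩ := aux_prox_spec hfG (div_pos hηpos hγ) (γ⁻¹ • x)
      have h1 := hmin w 0 hr.le
      have h2 := hwmin _ t ht.le
      rw [ht, EReal.toReal_coe] at hβ
      have h3 : (η / γ) * t ≤ (σ / γ) * t := by linarith
      have htpos : 0 < t := by
        by_contra hneg
        push Not at hneg
        nlinarith
      have h4 := le_of_mul_le_mul_right h3 htpos
      have h5 : η ≤ σ := by
        rwa [div_le_div_iff_of_pos_right hγ] at h4
      linarith
    · exact hcase0 hβz.symm
  · -- the proximity operator of the perspective
    set a : H := x - γ • w with ha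
    have hsub := aux_subgrad hfG.2.2.2 (div_pos hσpos hγ) hr hwmin
    have hφa : φ (σ⁻¹ • a) ≤ ((σ⁻¹ * inner ℝ a w : ℝ) : EReal) := by
      rw [← aux_FM hφ]
      refine aux_fconj_le hfG.2.1 fun u t hu => ?_
      have h1 := hsub u t hu
      have h2 : γ⁻¹ • x - w = γ⁻¹ • a := by
        rw [ha, smul_sub, smul_smul, inv_mul_cancel₀ hγ.ne', one_smul]
      rw [h2, real_inner_smul_left, inner_sub_right] at h1
      rw [real_inner_smul_left, ← mul_sub, inv_mul_le_iff₀ hσpos]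
      have h3 : γ⁻¹ * (inner ℝ a u - inner ℝ a w) ≤ γ⁻¹ * (σ * t) := by
        have : σ / γ * t = γ⁻¹ * (σ * t) := by field_simp
        linarith
      exact le_of_mul_le_mul_left h3 (inv_pos.2 hγ)
    have hup : persp φ s (pairHG a p) ≤ ((inner ℝ a w : ℝ) : EReal) := by
      refine sSup_le ?_
      rintro _ ⟨g, -, -, hg, rfl⟩
      refine (hg _).trans ?_
      have : prePersp φ s (pairHG a p) = s p * φ ((s p).toReal⁻¹ • a) := by
        unfold prePersp pairHG
        simp only [Equiv.apply_symm_apply]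
        rw [if_pos ⟨hpos, hlt⟩]
      rw [this, ← hσ, hsσ]
      calc (σ : EReal) * φ (σ⁻¹ • a) ≤ (σ : EReal) * ((σ⁻¹ * inner ℝ a w : ℝ) : EReal) :=
            mul_le_mul_of_nonneg_left hφa (by exact_mod_cast hσpos.le)
        _ = ((inner ℝ a w : ℝ) : EReal) := by
            rw [← EReal.coe_mul, ← mul_assoc, mul_inv_cancel₀ hσpos.ne', one_mul]
    have hlow : ∀ q : WithLp 2 (H × G),
        (if q ∈ {q : WithLp 2 (H × G) | q.snd ∈ closure (sdom s)} then
          ((inner ℝ q.fst w : ℝ) : EReal) else ⊤) ≤ persp φ s q := by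
      intro q
      refine le_sSup ⟨fun q : WithLp 2 (H × G) =>
        (if q ∈ {q : WithLp 2 (H × G) | q.snd ∈ closure (sdom s)} then
          ((inner ℝ q.fst w : ℝ) : EReal) else ⊤), ?_, ?_, ?_, rfl⟩
      · refine aux_restrict_lsc ?_ ?_
        · exact isClosed_closure.preimage
            (by fun_prop : Continuous fun q : WithLp 2 (H × G) => q.snd)
        · refine Continuous.lowerSemicontinuous (continuous_coe_real_ereal.comp ?_)
          fun_prop
      · refine aux_restrict_convex ?_ ?_
        · intro u hu v hv k l hk hl hkl
          exact hScv hu hv hk hl hkl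
        · intro u hu v hv k l hk hl hkl
          simp only [Set.mem_ofPred_eq, EReal.coe_le_coe_iff] at *
          simp only [Prod.fst_add, Prod.snd_add, Prod.smul_fst, Prod.smul_snd, smul_eq_mul,
            WithLp.add_fst, WithLp.smul_fst, inner_add_left, real_inner_smul_left]
          nlinarith
      · intro v
        by_cases hv : v.snd ∈ sdom s
        · have h1 : v ∈ {q : WithLp 2 (H × G) | q.snd ∈ closure (sdom s)} := subset_closure hv
          simp only [h1, if_true]
          have h2 : prePersp φ s v = s v.snd * φ ((s v.snd).toReal⁻¹ • v.fst) := by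
            unfold prePersp
            exact if_pos hv
          rw [h2]
          have hτ := EReal.coe_toReal hv.2.ne (ne_bot_of_gt hv.1)
          have hτpos : 0 < (s v.snd).toReal := EReal.toReal_pos hv.1 hv.2.ne
          set τ := (s v.snd).toReal
          rw [← hτ]
          have h3 := aux_le_fconj φ (τ⁻¹ • v.fst) w
          rw [hw0] at h3
          have h4 : ((inner ℝ (τ⁻¹ • v.fst) w : ℝ) : EReal) ≤ φ (τ⁻¹ • v.fst) := by
            have hb := hφ.2.1 (τ⁻¹ • v.fst)
            generalize φ (τ⁻¹ • v.fst) = l at *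
            induction l using EReal.rec with
            | top => simp
            | bot => exact absurd rfl hb
            | coe l =>
              rw [← EReal.coe_sub] at h3
              have : inner ℝ (τ⁻¹ • v.fst) w - l ≤ 0 := by exact_mod_cast h3
              exact EReal.coe_le_coe_iff.2 (by linarith)
          calc ((inner ℝ v.fst w : ℝ) : EReal)
              = (τ : EReal) * ((inner ℝ (τ⁻¹ • v.fst) w : ℝ) : EReal) := by
                rw [← EReal.coe_mul, real_inner_smul_left, ← mul_assoc,
                  mul_inv_cancel₀ hτpos.ne', one_mul]
            _ ≤ _ := mul_le_mul_of_nonneg_left h4 (by exact_mod_cast hτpos.le)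
        · have h2 : prePersp φ s v = ⊤ := by
            unfold prePersp
            exact if_neg hv
          rw [h2]; exact le_top
    -- quantitative lower bound
    set m : ℝ := γ * inner ℝ a w + ‖pairHG x y - pairHG a p‖ ^ 2 / 2 with hm
    have hnorm : ∀ (u : H) (v : G), ‖pairHG x y - pairHG u v‖ ^ 2 = ‖x - u‖ ^ 2 + ‖y - v‖ ^ 2 := by
      intro u v
      rw [WithLp.prod_norm_sq_eq_of_L2]
      rfl
    have hquant : ∀ (u : H) (v : G), v ∈ closure (sdom s) →
        m + ‖u - a‖ ^ 2 / 2 + ‖v - p‖ ^ 2 / 2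
          ≤ γ * inner ℝ u w + ‖pairHG x y - pairHG u v‖ ^ 2 / 2 := by
      intro u v hv
      have h1 := aux_proj_ineq (hpI v hv)
      rw [hm, hnorm, hnorm]
      have h2 : x - u = (x - a) - (u - a) := by abel
      have h3 : x - a = γ • w := by rw [ha]; abel
      have h4 : ‖x - u‖ ^ 2 = ‖x - a‖ ^ 2 - 2 * (γ * (inner ℝ u w - inner ℝ a w))
          + ‖u - a‖ ^ 2 := by
        rw [h2, norm_sub_sq_real (x - a) (u - a), h3, real_inner_smul_left, inner_sub_right,
          real_inner_comm, real_inner_comm a w]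
      linarith
    have hγE : (0 : EReal) ≤ (γ : EReal) := by exact_mod_cast hγ.le
    have hupE : smulE γ (persp φ s) (pairHG a p)
        + ((‖pairHG x y - pairHG a p‖ ^ 2 / 2 : ℝ) : EReal) ≤ (m : EReal) := by
      rw [hm, EReal.coe_add]
      refine add_le_add ?_ le_rfl
      rw [EReal.coe_mul]
      exact mul_le_mul_of_nonneg_left hup hγE
    have hlowE : ∀ (u : H) (v : G), v ∈ closure (sdom s) →
        ((m + ‖u - a‖ ^ 2 / 2 + ‖v - p‖ ^ 2 / 2 : ℝ) : EReal) ≤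
        smulE γ (persp φ s) (pairHG u v)
        + ((‖pairHG x y - pairHG u v‖ ^ 2 / 2 : ℝ) : EReal) := by
      intro u v hv
      refine (EReal.coe_le_coe_iff.2 (hquant u v hv)).trans ?_
      rw [EReal.coe_add]
      refine add_le_add ?_ le_rfl
      rw [EReal.coe_mul]
      refine mul_le_mul_of_nonneg_left ?_ hγE
      refine le_trans (le_of_eq ?_) (hlow _)
      rw [if_pos]
      · rfl
      · exact hv
    have htopE : ∀ (u : H) (v : G), v ∉ closure (sdom s) →
        smulE γ (persp φ s) (pairHG u v)
        + ((‖pairHG x y - pairHG u v‖ ^ 2 / 2 : ℝ) : EReal) = ⊤ := by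
      intro u v hv
      have h1 := hlow (pairHG u v)
      rw [if_neg (by exact hv), top_le_iff] at h1
      rw [smulE, h1, EReal.coe_mul_top_of_pos hγ, EReal.top_add_coe]
    have hsurj : ∀ q : WithLp 2 (H × G), q = pairHG q.fst q.snd := fun q => rfl
    have hex : ∃ q, ∀ z, smulE γ (persp φ s) q + ((‖pairHG x y - q‖ ^ 2 / 2 : ℝ) : EReal)
        ≤ smulE γ (persp φ s) z + ((‖pairHG x y - z‖ ^ 2 / 2 : ℝ) : EReal) := by
      refine ⟨pairHG a p, fun z => hupE.trans ?_⟩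
      rw [hsurj z]
      by_cases hv : z.snd ∈ closure (sdom s)
      · refine le_trans (EReal.coe_le_coe_iff.2 ?_) (hlowE _ _ hv)
        have : 0 ≤ ‖z.fst - a‖ ^ 2 / 2 := by positivity
        have : 0 ≤ ‖z.snd - p‖ ^ 2 / 2 := by positivity
        linarith
      · rw [htopE _ _ hv]; exact le_top
    have hspec := Classical.epsilon_spec hex
    change ∀ z, smulE γ (persp φ s) (prox (smulE γ (persp φ s)) (pairHG x y))
      + ((‖pairHG x y - prox (smulE γ (persp φ s)) (pairHG x y)‖ ^ 2 / 2 : ℝ) : EReal)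
        ≤ smulE γ (persp φ s) z + ((‖pairHG x y - z‖ ^ 2 / 2 : ℝ) : EReal) at hspec
    generalize prox (smulE γ (persp φ s)) (pairHG x y) = q at *
    have hq := (hspec (pairHG a p)).trans hupE
    rw [hsurj q] at hq ⊢
    by_cases hv : q.snd ∈ closure (sdom s)
    · have h1 := EReal.coe_le_coe_iff.1 ((hlowE q.fst q.snd hv).trans hq)
      have h2 : ‖q.fst - a‖ = 0 := by
        nlinarith [sq_nonneg ‖q.fst - a‖, sq_nonneg ‖q.snd - p‖]
      have h3 : ‖q.snd - p‖ = 0 := by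
        nlinarith [sq_nonneg ‖q.fst - a‖, sq_nonneg ‖q.snd - p‖]
      rw [sub_eq_zero.1 (norm_eq_zero.1 h2), sub_eq_zero.1 (norm_eq_zero.1 h3)]
    · rw [htopE _ _ hv] at hq
      exact absurd (top_le_iff.1 hq) (EReal.coe_ne_top _)
end

section
/- Let φ ∈ Γ₀(H) satisfy φ*(H) ⊂ (−∞,0] ∪ {+∞} and (φ*)⁻¹((−∞,0)) ≠ ∅, let s ∈ Γ₀(G) be such that S = s⁻¹((0,+∞)) ≠ ∅, let γ ∈ (0,+∞), and let (x,y) ∈ Ξ₁. Then the unique η ∈ [0,+∞) satisfying φ*( prox_{((1/γ)·s_▲(prox_{(γη)⊙s_▲} y))⊙φ*}(x/γ) ) + η = 0 equals 0, and prox_{γ(φ▷s)}(x,y) = ( x − γ·proj_{cl dom φ*}(x/γ), proj_{cl conv S} y ). -/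
open scoped Classical

noncomputable section

/-- `Ξ₁` of Proposition 4.3. -/
def Xi1 {H G : Type*} [NormedAddCommGroup H] [InnerProductSpace ℝ H]
    [NormedAddCommGroup G] [InnerProductSpace ℝ G]
    (φ : H → EReal) (s : G → EReal) (γ : ℝ) : Set (H × G) :=
  {p | hautEnv s (projC (closure (convexHull ℝ (sdom s))) p.2) = 0 ∧
       fconj φ (projC (closure (edom (fconj φ))) (γ⁻¹ • p.1)) = 0}

/-- `Ξ₂` of Proposition 4.3. -/
def Xi2 {H G : Type*} [NormedAddCommGroup H] [InnerProductSpace ℝ H]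
    [NormedAddCommGroup G] [InnerProductSpace ℝ G]
    (φ : H → EReal) (s : G → EReal) (γ : ℝ) : Set (H × G) :=
  {p | (0 < hautEnv s (projC (closure (convexHull ℝ (sdom s))) p.2) ∧
        hautEnv s (projC (closure (convexHull ℝ (sdom s))) p.2) < ⊤) ∧
       fconj φ (prox (smulE (γ⁻¹ * (hautEnv s (projC (closure (convexHull ℝ (sdom s))) p.2)).toReal)
          (fconj φ)) (γ⁻¹ • p.1)) = 0}

/-- `Ξ₃` of Proposition 4.3. -/
def Xi3 {H G : Type*} [NormedAddCommGroup H] [InnerProductSpace ℝ H]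
    [NormedAddCommGroup G] [InnerProductSpace ℝ G]
    (φ : H → EReal) (s : G → EReal) (γ : ℝ) : Set (H × G) :=
  {p | hautEnv s (prox (smulE (γ * (-(fconj φ (projC (closure (edom (fconj φ))) (γ⁻¹ • p.1)))).toReal)
          (hautEnv s)) p.2) = 0 ∧
       fconj φ (projC (closure (edom (fconj φ))) (γ⁻¹ • p.1)) < 0}

/-- The equation (4.4) for `η` in Theorem 4.1(iii). -/
def eta9eq {H G : Type*} [NormedAddCommGroup H] [InnerProductSpace ℝ H]
    [NormedAddCommGroup G] [InnerProductSpace ℝ G]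
    (φ : H → EReal) (s : G → EReal) (γ : ℝ) (x : H) (y : G) (η : ℝ) : Prop :=
  fconj φ (prox (rscale (γ⁻¹ * (hautEnv s (prox (rscale (γ * η) (hautEnv s)) y)).toReal)
      (fconj φ)) (γ⁻¹ • x)) + (η : EReal) = 0

end

section helpers

theorem h16_prox_eq {E : Type*} [NormedAddCommGroup E] [InnerProductSpace ℝ E]
    (F : E → EReal) (x p : E) (r : ℝ) (hp : F p = (r : EReal))
    (h : ∀ z, ((r + inner ℝ (x - p) (z - p) : ℝ) : EReal) ≤ F z) : prox F x = p := by
  have key : ∀ z, ((r + ‖x - p‖ ^ 2 / 2 + ‖z - p‖ ^ 2 / 2 : ℝ) : EReal)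
      ≤ F z + ((‖x - z‖ ^ 2 / 2 : ℝ) : EReal) := by
    intro z
    have e : r + ‖x - p‖ ^ 2 / 2 + ‖z - p‖ ^ 2 / 2
        = (r + inner ℝ (x - p) (z - p)) + ‖x - z‖ ^ 2 / 2 := by
      have : x - z = (x - p) - (z - p) := by abel
      rw [this, norm_sub_sq_real (x - p) (z - p)]; ring
    rw [e, EReal.coe_add]
    exact add_le_add (h z) le_rfl
  have hmin : ∀ y, F p + ((‖x - p‖ ^ 2 / 2 : ℝ) : EReal) ≤ F y + ((‖x - y‖ ^ 2 / 2 : ℝ) : EReal) := by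
    intro z
    refine le_trans ?_ (key z)
    rw [hp, ← EReal.coe_add, EReal.coe_le_coe_iff]
    nlinarith [sq_nonneg ‖z - p‖]
  have hs := Classical.epsilon_spec (p := fun p => ∀ y, F p + ((‖x - p‖ ^ 2 / 2 : ℝ) : EReal)
    ≤ F y + ((‖x - y‖ ^ 2 / 2 : ℝ) : EReal)) ⟨p, hmin⟩
  change ∀ y, F (prox F x) + ((‖x - prox F x‖ ^ 2 / 2 : ℝ) : EReal)
    ≤ F y + ((‖x - y‖ ^ 2 / 2 : ℝ) : EReal) at hs
  have h1 := (key (prox F x)).trans (hs p)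
  rw [hp, ← EReal.coe_add, EReal.coe_le_coe_iff] at h1
  have h2 : ‖prox F x - p‖ ^ 2 ≤ 0 := by linarith
  have h3 : ‖prox F x - p‖ = 0 := by
    have := sq_nonneg ‖prox F x - p‖
    exact pow_eq_zero_iff (two_ne_zero) |>.1 (le_antisymm h2 this)
  exact sub_eq_zero.1 (norm_eq_zero.1 h3)

theorem h16_projC {E : Type*} [NormedAddCommGroup E] [InnerProductSpace ℝ E] [CompleteSpace E]
    (C : Set E) (hne : C.Nonempty) (hcl : IsClosed C) (hcv : Convex ℝ C) (x : E) :
    projC C x ∈ C ∧ ∀ w ∈ C, inner ℝ (x - projC C x) (w - projC C x) ≤ 0 := by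
  obtain ⟨v, hv, he⟩ := exists_norm_eq_iInf_of_complete_convex hne hcl.isComplete hcv x
  have hbdd : BddBelow (Set.range fun w : C => ‖x - w‖) :=
    ⟨0, by rintro _ ⟨w, rfl⟩; exact norm_nonneg _⟩
  have hs := Classical.epsilon_spec (p := fun p => p ∈ C ∧ ∀ y ∈ C, ‖x - p‖ ≤ ‖x - y‖)
    ⟨v, hv, fun y hy => by rw [he]; exact ciInf_le hbdd (⟨y, hy⟩ : C)⟩
  change projC C x ∈ C ∧ ∀ y ∈ C, ‖x - projC C x‖ ≤ ‖x - y‖ at hs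
  refine ⟨hs.1, (norm_eq_iInf_iff_real_inner_le_zero hcv hs.1).1 ?_⟩
  haveI : Nonempty C := hne.to_subtype
  apply le_antisymm
  · exact le_ciInf fun w => hs.2 w w.2
  · exact ciInf_le hbdd (⟨_, hs.1⟩ : C)

theorem h16_fconj_le {E : Type*} [NormedAddCommGroup E] [InnerProductSpace ℝ E]
    (f : E → EReal) (u : E) (r : ℝ) :
    fconj f u ≤ (r : EReal) ↔ ∀ v, ((inner ℝ v u - r : ℝ) : EReal) ≤ f v := by
  unfold fconj
  rw [iSup_le_iff]
  refine forall_congr' fun v => ?_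
  generalize f v = t
  induction t using EReal.rec with
  | bot => simp [-EReal.coe_sub]
  | top => simp
  | coe t =>
    rw [← EReal.coe_sub, EReal.coe_le_coe_iff, EReal.coe_le_coe_iff]
    constructor <;> intro h <;> linarith

theorem h16_edom {E : Type*} (f : E → EReal) (u : E) :
    u ∈ edom f ↔ ∃ r : ℝ, f u ≤ (r : EReal) := by
  constructor
  · intro h
    obtain ⟨r, hr, -⟩ := EReal.lt_iff_exists_real_btwn.1 (show f u < ⊤ from h)
    exact ⟨r, hr.le⟩
  · rintro ⟨r, hr⟩
    exact lt_of_le_of_lt hr (EReal.coe_lt_top r)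

theorem h16_convex_edom {E : Type*} [NormedAddCommGroup E] [InnerProductSpace ℝ E]
    (f : E → EReal) : Convex ℝ (edom (fconj f)) := by
  intro u hu w hw a b ha hb hab
  rw [h16_edom] at *
  obtain ⟨r, hr⟩ := hu
  obtain ⟨t, ht⟩ := hw
  rw [h16_fconj_le] at hr ht
  refine ⟨a * r + b * t, (h16_fconj_le _ _ _).2 fun v => ?_⟩
  have e : inner ℝ v (a • u + b • w) - (a * r + b * t)
      = a * (inner ℝ v u - r) + b * (inner ℝ v w - t) := by
    rw [inner_add_right, inner_smul_right, inner_smul_right]; ring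
  rcases le_total (inner ℝ v u - r) (inner ℝ v w - t) with h | h
  · refine le_trans (EReal.coe_le_coe_iff.2 ?_) (ht v)
    rw [e]
    calc _ ≤ a * (inner ℝ v w - t) + b * (inner ℝ v w - t) := by gcongr
      _ = _ := by rw [← add_mul, hab, one_mul]
  · refine le_trans (EReal.coe_le_coe_iff.2 ?_) (hr v)
    rw [e]
    calc _ ≤ a * (inner ℝ v u - r) + b * (inner ℝ v u - r) := by gcongr
      _ = _ := by rw [← add_mul, hab, one_mul]

theorem h16_haut_nonneg {E : Type*} [NormedAddCommGroup E] [InnerProductSpace ℝ E]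
    (s : E → EReal) (v : E) : 0 ≤ hautEnv s v := by
  have h0 : fconj (phaut s) 0 ≤ ((0 : ℝ) : EReal) := by
    rw [h16_fconj_le]
    intro w
    simp only [inner_zero_right, sub_zero, EReal.coe_zero, phaut]
    split_ifs with h
    · exact h.1.le
    · exact le_top
  have h1 : ((inner ℝ (0 : E) v : ℝ) : EReal) - fconj (phaut s) 0 ≤ hautEnv s v :=
    le_iSup (fun x => ((inner ℝ x v : ℝ) : EReal) - fconj (phaut s) x) 0
  refine le_trans ?_ h1
  rw [inner_zero_left]
  exact le_trans (by simp) (EReal.sub_le_sub le_rfl h0)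

theorem h16_haut_le {E : Type*} [NormedAddCommGroup E] [InnerProductSpace ℝ E]
    (s : E → EReal) (v : E) (r : ℝ) : hautEnv s v ≤ (r : EReal) ↔
    ∀ (u : E) (t : ℝ), (∀ w ∈ sdom s, ((inner ℝ w u - t : ℝ) : EReal) ≤ s w) → inner ℝ u v - r ≤ t := by
  unfold hautEnv
  rw [h16_fconj_le]
  refine forall_congr' fun u => ?_
  have : ∀ t : ℝ, fconj (phaut s) u ≤ (t : EReal) ↔
      (∀ w ∈ sdom s, ((inner ℝ w u - t : ℝ) : EReal) ≤ s w) := by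
    intro t
    rw [h16_fconj_le]
    refine forall_congr' fun w => ?_
    unfold phaut sdom
    by_cases h : 0 < s w ∧ s w < ⊤
    · simp [h]
    · rw [if_neg h]; exact ⟨fun _ h' => absurd h' h, fun _ => le_top⟩
  simp only [← this]
  constructor
  · intro h t ht
    exact EReal.coe_le_coe_iff.1 (h.trans ht)
  · intro h
    apply EReal.le_of_forall_lt_iff_le.1
    intro t ht
    exact EReal.coe_le_coe_iff.2 (h t ht.le)

theorem h16_riesz {E : Type*} [NormedAddCommGroup E] [InnerProductSpace ℝ E] [CompleteSpace E]
    (f : StrongDual ℝ E) : ∃ u : E, ∀ v, f v = inner ℝ v u := by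
  refine ⟨(InnerProductSpace.toDual ℝ E).symm f, fun v => ?_⟩
  rw [real_inner_comm, InnerProductSpace.toDual_symm_apply]

theorem h16_riesz_prod {E : Type*} [NormedAddCommGroup E] [InnerProductSpace ℝ E] [CompleteSpace E]
    (f : StrongDual ℝ (E × ℝ)) : ∃ (u : E) (β : ℝ), ∀ v r, f (v, r) = inner ℝ v u + β * r := by
  obtain ⟨u, hu⟩ := h16_riesz (f.comp (ContinuousLinearMap.inl ℝ E ℝ))
  refine ⟨u, f (0, 1), fun v r => ?_⟩
  rw [← hu]
  have : (v, r) = (v, (0 : ℝ)) + r • ((0 : E), (1 : ℝ)) := by simp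
  rw [this, map_add, map_smul]
  simp [mul_comm]

theorem h16_closure_edom {E : Type*} [NormedAddCommGroup E] [InnerProductSpace ℝ E]
    [CompleteSpace E] (s : E → EReal) :
    closure (edom (hautEnv s)) = closure (convexHull ℝ (sdom s)) := by
  apply subset_antisymm
  · refine closure_minimal ?_ isClosed_closure
    intro z hz
    by_contra hzC
    obtain ⟨f, α, h1, h2⟩ := geometric_hahn_banach_closed_point
      ((convex_convexHull ℝ (sdom s)).closure) isClosed_closure hzC
    obtain ⟨u, hu⟩ := h16_riesz f
    rw [h16_edom] at hz
    obtain ⟨r, hr⟩ := hz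
    rw [h16_haut_le] at hr
    rw [hu] at h2
    set l : ℝ := (|r| + 1) / (inner ℝ z u - α) with hl
    have hpos : 0 < inner ℝ z u - α := by linarith
    have hlpos : 0 < l := by positivity
    have h3 := hr (l • u) (l * α) (by
      intro w hw
      refine le_trans ?_ hw.1.le
      rw [← EReal.coe_zero, EReal.coe_le_coe_iff, inner_smul_right]
      have := h1 w (subset_closure (subset_convexHull ℝ _ hw))
      rw [hu] at this
      nlinarith)
    rw [inner_smul_left, real_inner_comm] at h3
    have h4 : l * (inner ℝ z u - α) = |r| + 1 := by rw [hl]; field_simp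
    simp only [conj_trivial] at h3
    have := le_abs_self r
    nlinarith
  · apply closure_mono
    refine convexHull_min ?_ (h16_convex_edom _)
    intro v hv
    rw [h16_edom]
    obtain ⟨r, hr⟩ := (h16_edom s v).1 hv.2
    refine ⟨r, (h16_haut_le _ _ _).2 fun u t h => ?_⟩
    have := EReal.coe_le_coe_iff.1 ((h v hv).trans hr)
    rw [real_inner_comm]; linarith

theorem h16_prox_rscale {E : Type*} [NormedAddCommGroup E] [InnerProductSpace ℝ E]
    (f : E → EReal) (ξ : ℝ) (hξ : 0 ≤ ξ) (hf : ξ = 0 ∨ ∀ z, 0 ≤ f z) (y q : E)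
    (hq : q ∈ closure (edom f)) (h : ∀ w ∈ closure (edom f), inner ℝ (y - q) (w - q) ≤ 0)
    (h0 : f q = 0) : prox (rscale ξ f) y = q := by
  apply h16_prox_eq _ _ _ 0
  · unfold rscale
    split_ifs with h1
    · simp [hq]
    · simp [h0]
  · intro z
    rw [zero_add]
    by_cases hz : z ∈ closure (edom f)
    · refine le_trans (EReal.coe_le_coe_iff.2 (h z hz)) ?_
      rw [EReal.coe_zero]
      unfold rscale
      split_ifs with h1
      · simp [hz]
      · exact mul_nonneg (EReal.coe_nonneg.2 hξ) ((hf.resolve_left h1) z)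
    · have : rscale ξ f z = ⊤ := by
        unfold rscale
        split_ifs with h1
        · simp [hz]
        · have : f z = ⊤ := by
            by_contra h2
            exact hz (subset_closure (lt_top_iff_ne_top.2 h2))
          simp only [this]
          exact EReal.coe_mul_top_of_pos (lt_of_le_of_ne hξ (Ne.symm h1))
      rw [this]; exact le_top

theorem h16_epi_closed {E : Type*} [TopologicalSpace E] (g : E → EReal)
    (hg : LowerSemicontinuous g) : IsClosed {p : E × ℝ | g p.1 ≤ (p.2 : EReal)} := by
  have := hg.isClosed_epigraph
  exact this.preimage (f := fun p : E × ℝ => (p.1, (p.2 : EReal)))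
    (continuous_fst.prodMk (continuous_coe_real_ereal.comp continuous_snd))

/-- Recession bound for `φ`. -/
theorem h16_rec {H : Type*} [NormedAddCommGroup H] [InnerProductSpace ℝ H] [CompleteSpace H]
    (φ : H → EReal) (hφ : IsGamma0 φ) (w0 a p : H) (c t : ℝ) (ht : 0 < t) (hc : φ w0 = (c : EReal))
    (hp : fconj φ p = 0) (hmax : ∀ u ∈ edom (fconj φ), inner ℝ a u ≤ inner ℝ a p) :
    φ (w0 + t⁻¹ • a) ≤ ((c + t⁻¹ * inner ℝ a p : ℝ) : EReal) := by
  obtain ⟨-, hbot, hlsc, hcv⟩ := hφ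
  by_contra hcon
  have hti : 0 < t⁻¹ := inv_pos.2 ht
  obtain ⟨f, α, h1, h2⟩ := geometric_hahn_banach_closed_point hcv (h16_epi_closed φ hlsc)
    (x := (w0 + t⁻¹ • a, c + t⁻¹ * inner ℝ a p)) hcon
  obtain ⟨u, β, hu⟩ := h16_riesz_prod f
  have h3 : ∀ v r, φ v ≤ ((r : ℝ) : EReal) → inner ℝ v u + β * r < α := by
    intro v r hvr
    rw [← hu]; exact h1 (v, r) hvr
  rw [hu, inner_add_left, inner_smul_left, conj_trivial] at h2
  have h4 := h3 w0 c hc.le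
  have hp' : ∀ v, ((inner ℝ v p - 0 : ℝ) : EReal) ≤ φ v := by
    rw [← h16_fconj_le, hp]; simp
  have hβ : β ≤ 0 := by
    by_contra hβ
    push Not at hβ
    have h5 := h3 w0 (c + (α - inner ℝ w0 u - β * c) / β)
      (by rw [hc, EReal.coe_le_coe_iff]
          have : 0 < (α - inner ℝ w0 u - β * c) / β := div_pos (by linarith) hβ
          linarith)
    have : β * ((α - inner ℝ w0 u - β * c) / β) = (α - inner ℝ w0 u - β * c) := by field_simp
    nlinarith
  rcases hβ.lt_or_eq with hβ | hβ
  · -- normalise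
    set k := (-β)⁻¹ with hk
    have hkp : 0 < k := inv_pos.2 (by linarith)
    have hkb : k * β = -1 := by
      have : β ≠ 0 := hβ.ne
      rw [hk]; field_simp
    have hdom : k • u ∈ edom (fconj φ) := by
      rw [h16_edom]
      refine ⟨k * α, (h16_fconj_le _ _ _).2 fun v => ?_⟩
      apply EReal.le_of_forall_lt_iff_le.1
      intro r hr
      have h5 := mul_lt_mul_of_pos_left (h3 v r hr.le) hkp
      rw [mul_add, ← mul_assoc k β, hkb] at h5
      rw [EReal.coe_le_coe_iff, inner_smul_right]
      linarith
    have h5 := hmax _ hdom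
    rw [inner_smul_right] at h5
    have h6 : t⁻¹ * (k * inner ℝ a u) ≤ t⁻¹ * inner ℝ a p := mul_le_mul_of_nonneg_left h5 hti.le
    have h7 := mul_lt_mul_of_pos_left (h4.trans h2) hkp
    have h8 : k * (β * (c + t⁻¹ * inner ℝ a p)) = - (c + t⁻¹ * inner ℝ a p) := by
      rw [← mul_assoc, hkb]; ring
    have h9 : k * (β * c) = - c := by rw [← mul_assoc, hkb]; ring
    nlinarith
  · subst hβ
    simp only [zero_mul, add_zero] at h2 h4
    have hdom : ∀ l : ℝ, 0 ≤ l → p + l • u ∈ edom (fconj φ) := by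
      intro l hl
      rw [h16_edom]
      refine ⟨l * α, (h16_fconj_le _ _ _).2 fun v => ?_⟩
      apply EReal.le_of_forall_lt_iff_le.1
      intro r hr
      have h5 := h3 v r hr.le
      have h6 := EReal.coe_le_coe_iff.1 ((hp' v).trans hr.le)
      rw [EReal.coe_le_coe_iff, inner_add_right, inner_smul_right]
      nlinarith
    have h5 := hmax _ (hdom 1 zero_le_one)
    rw [one_smul, inner_add_right] at h5
    have h6 : t⁻¹ * inner ℝ a u ≤ 0 := mul_nonpos_of_nonneg_of_nonpos hti.le (by linarith)
    linarith

/-- `(q, 0)` lies in the closed convex hull of the graph of `s` restricted to `S`. -/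
theorem h16_graph {G : Type*} [NormedAddCommGroup G] [InnerProductSpace ℝ G] [CompleteSpace G]
    (s : G → EReal) (q : G) (hq : q ∈ closure (convexHull ℝ (sdom s))) (h0 : hautEnv s q = 0) :
    (q, (0 : ℝ)) ∈ closure (convexHull ℝ {p : G × ℝ | p.1 ∈ sdom s ∧ s p.1 = (p.2 : EReal)}) := by
  by_contra hcon
  obtain ⟨f, α, h1, h2⟩ := geometric_hahn_banach_closed_point
      ((convex_convexHull ℝ _).closure) isClosed_closure hcon
  obtain ⟨u, β, hu⟩ := h16_riesz_prod f
  have h3 : ∀ v ∈ sdom s, ∀ r : ℝ, s v = (r : EReal) → inner ℝ v u + β * r < α := by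
    intro v hv r hr
    rw [← hu]; exact h1 (v, r) (subset_closure (subset_convexHull ℝ _ ⟨hv, hr⟩))
  rw [hu, mul_zero, add_zero] at h2
  have hreal : ∀ v ∈ sdom s, ∃ r : ℝ, 0 < r ∧ s v = (r : EReal) := by
    intro v hv
    refine ⟨(s v).toReal, ?_, (EReal.coe_toReal hv.2.ne (ne_bot_of_gt hv.1)).symm⟩
    exact EReal.toReal_pos hv.1 hv.2.ne
  rcases lt_or_ge β 0 with hβ | hβ
  · set k := (-β)⁻¹ with hk
    have hkp : 0 < k := inv_pos.2 (by linarith)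
    have hkb : k * β = -1 := by
      have : β ≠ 0 := hβ.ne
      rw [hk]; field_simp
    have h4 := (h16_haut_le s q 0).1 (by rw [h0]; simp) (k • u) (k * α) (by
      intro w hw
      obtain ⟨r, -, hr⟩ := hreal w hw
      have := mul_lt_mul_of_pos_left (h3 w hw r hr) hkp
      rw [mul_add, ← mul_assoc k β, hkb] at this
      rw [hr, EReal.coe_le_coe_iff, inner_smul_right]
      linarith)
    rw [inner_smul_left, conj_trivial, real_inner_comm] at h4
    nlinarith
  · have : closure (convexHull ℝ (sdom s)) ⊆ {v | inner ℝ v u ≤ α} := by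
      refine closure_minimal (convexHull_min ?_ ?_) ?_
      · intro v hv
        obtain ⟨r, hr0, hr⟩ := hreal v hv
        have := h3 v hv r hr
        show inner ℝ v u ≤ α
        nlinarith
      · intro v hv w hw a b ha hb hab
        simp only [Set.mem_setOf_eq, inner_add_left, inner_smul_left, conj_trivial] at *
        calc _ ≤ a * α + b * α := by gcongr
          _ = α := by rw [← add_mul, hab, one_mul]
      · exact isClosed_le (by fun_prop) continuous_const
    have := this hq
    simp only [Set.mem_setOf_eq] at this
    linarith

theorem h16_persp_le {H G : Type*} [NormedAddCommGroup H] [InnerProductSpace ℝ H] [CompleteSpace H]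
    [NormedAddCommGroup G] [InnerProductSpace ℝ G] [CompleteSpace G]
    (φ : H → EReal) (s : G → EReal) (hφ : IsGamma0 φ) (a p : H) (q : G)
    (hp : fconj φ p = 0) (hmax : ∀ u ∈ edom (fconj φ), inner ℝ a u ≤ inner ℝ a p)
    (hq : q ∈ closure (convexHull ℝ (sdom s))) (h0 : hautEnv s q = 0) :
    persp φ s (pairHG a q) ≤ ((inner ℝ a p : ℝ) : EReal) := by
  apply sSup_le
  rintro _ ⟨g, hlsc, hcv, hle, rfl⟩
  obtain ⟨⟨w0, hw0⟩, hbot, -, -⟩ := id hφ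
  obtain ⟨c, hc⟩ : ∃ c : ℝ, φ w0 = (c : EReal) := ⟨_, (EReal.coe_toReal hw0 (hbot w0)).symm⟩
  set L : G × ℝ → WithLp 2 (H × G) × ℝ :=
    fun z => (pairHG (z.2 • w0 + a) z.1, z.2 * c + inner ℝ a p) with hL
  have hcont : Continuous L := by
    have h1 : Continuous fun z : G × ℝ => WithLp.toLp 2 (z.2 • w0 + a, z.1) :=
      (WithLp.prod_continuous_toLp 2 H G).comp (by fun_prop)
    exact Continuous.prodMk h1 (by fun_prop)
  have hconv : Convex ℝ (L ⁻¹' {z | g z.1 ≤ (z.2 : EReal)}) := by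
    intro z hz w hw b d hb hd hbd
    have := hcv hz hw hb hd hbd
    have e : L (b • z + d • w) = b • L z + d • L w := by
      have ha : a = b • a + d • a := by rw [← add_smul, hbd, one_smul]
      have hi : inner ℝ a p = b * inner ℝ a p + d * inner ℝ a p := by rw [← add_mul, hbd, one_mul]
      have h1 : (b * z.2 + d * w.2) • w0 + a = b • (z.2 • w0 + a) + d • (w.2 • w0 + a) := by
        conv_lhs => rw [ha]
        module
      have h2 : (b * z.2 + d * w.2) * c + inner ℝ a p
          = b * (z.2 * c + inner ℝ a p) + d * (w.2 * c + inner ℝ a p) := by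
        conv_lhs => rw [hi]
        ring
      apply Prod.ext
      · change pairHG ((b * z.2 + d * w.2) • w0 + a) _ = _
        rw [h1]; rfl
      · exact h2
    rw [Set.mem_preimage, e]
    exact this
  have hsub : closure (convexHull ℝ {p : G × ℝ | p.1 ∈ sdom s ∧ s p.1 = (p.2 : EReal)})
      ⊆ L ⁻¹' {z | g z.1 ≤ (z.2 : EReal)} := by
    refine closure_minimal (convexHull_min ?_ hconv) ((h16_epi_closed g hlsc).preimage hcont)
    rintro ⟨v, r⟩ ⟨hv, hr⟩
    simp only at hv hr
    have hrpos : 0 < r := by have := hv.1; rw [hr] at this; exact_mod_cast this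
    show g (pairHG (r • w0 + a) v) ≤ ((r * c + inner ℝ a p : ℝ) : EReal)
    refine (hle _).trans ?_
    have hv' : 0 < s v ∧ s v < ⊤ := hv
    have e1 : prePersp φ s (pairHG (r • w0 + a) v) = s v * φ ((s v).toReal⁻¹ • (r • w0 + a)) := by
      unfold prePersp pairHG
      simp only [Equiv.apply_symm_apply]
      rw [if_pos hv']
    have e2 : r⁻¹ • (r • w0 + a) = w0 + r⁻¹ • a := by
      rw [smul_add, smul_smul, inv_mul_cancel₀ hrpos.ne', one_smul]
    rw [e1, hr, EReal.toReal_coe, e2]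
    refine (mul_le_mul_of_nonneg_left (h16_rec φ hφ w0 a p c r hrpos hc hp hmax)
      (EReal.coe_nonneg.2 hrpos.le)).trans ?_
    rw [← EReal.coe_mul, EReal.coe_le_coe_iff]
    apply le_of_eq
    field_simp
  have := hsub (h16_graph s q hq h0)
  have h2 : g (pairHG ((0 : ℝ) • w0 + a) q) ≤ (((0 : ℝ) * c + inner ℝ a p : ℝ) : EReal) := this
  simpa using h2

theorem h16_persp_ge {H G : Type*} [NormedAddCommGroup H] [InnerProductSpace ℝ H]
    [NormedAddCommGroup G] [InnerProductSpace ℝ G]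
    (φ : H → EReal) (s : G → EReal) (p : H) (q d : G)
    (hp : fconj φ p = 0) (hd : ∀ v ∈ sdom s, inner ℝ d (v - q) ≤ 0) (z : WithLp 2 (H × G)) :
    ((inner ℝ z.fst p + inner ℝ d (z.snd - q) : ℝ) : EReal) ≤ persp φ s z := by
  apply le_sSup
  refine ⟨fun z => ((inner ℝ z.fst p + inner ℝ d (z.snd - q) : ℝ) : EReal), ?_, ?_, ?_, rfl⟩
  · apply Continuous.lowerSemicontinuous
    apply continuous_coe_real_ereal.comp
    fun_prop
  · intro z hz w hw b e hb he hbe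
    simp only [Set.mem_setOf_eq, EReal.coe_le_coe_iff, inner_sub_right] at hz hw ⊢
    simp only [Prod.fst_add, Prod.snd_add, Prod.smul_fst, Prod.smul_snd, WithLp.add_fst,
      WithLp.add_snd, WithLp.smul_fst, WithLp.smul_snd, inner_add_left, inner_add_right,
      inner_smul_left, inner_smul_right, conj_trivial, smul_eq_mul]
    have h1 := mul_le_mul_of_nonneg_left hz hb
    have h2 := mul_le_mul_of_nonneg_left hw he
    have h3 : inner ℝ d q = b * inner ℝ d q + e * inner ℝ d q := by rw [← add_mul, hbe, one_mul]
    linarith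
  · intro r
    have hp' : ∀ v, ((inner ℝ v p - 0 : ℝ) : EReal) ≤ φ v := by
      rw [← h16_fconj_le, hp]; simp
    change _ ≤ (if 0 < s r.snd ∧ s r.snd < ⊤ then
      s r.snd * φ ((s r.snd).toReal⁻¹ • r.fst) else ⊤)
    split_ifs with h
    · have ht := EReal.toReal_pos h.1 h.2.ne
      have e := EReal.coe_toReal h.2.ne (ne_bot_of_gt h.1)
      set t := (s r.snd).toReal
      rw [← e]
      refine le_trans ?_ (mul_le_mul_of_nonneg_left (hp' _) (EReal.coe_nonneg.2 ht.le))
      rw [← EReal.coe_mul, EReal.coe_le_coe_iff, inner_smul_left, conj_trivial, sub_zero,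
        ← mul_assoc, mul_inv_cancel₀ ht.ne', one_mul]
      have := hd r.snd h
      linarith
    · exact le_top

end helpers

/-- Proposition 4.3(i). -/
theorem stmt16 {H G : Type*} [NormedAddCommGroup H] [InnerProductSpace ℝ H] [CompleteSpace H]
    [NormedAddCommGroup G] [InnerProductSpace ℝ G] [CompleteSpace G]
    (φ : H → EReal) (s : G → EReal) (hφ : IsGamma0 φ)
    (hc1 : ∀ u : H, (⊥ < fconj φ u ∧ fconj φ u ≤ 0) ∨ fconj φ u = ⊤)
    (hc2 : ∃ u : H, ⊥ < fconj φ u ∧ fconj φ u < 0)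
    (hs : IsGamma0 s)
    (hS : ∃ v : G, 0 < s v ∧ s v < ⊤)
    (γ : ℝ) (hγ : 0 < γ) (x : H) (y : G) (hmem : (x, y) ∈ Xi1 φ s γ) :
    eta9eq φ s γ x y 0 ∧ (∀ η : ℝ, 0 ≤ η → eta9eq φ s γ x y η → η = 0) ∧
    prox (smulE γ (persp φ s)) (pairHG x y) =
      pairHG (x - γ • projC (closure (edom (fconj φ))) (γ⁻¹ • x))
        (projC (closure (convexHull ℝ (sdom s))) y) := by
  obtain ⟨hq0, hp0⟩ := hmem
  simp only at hq0 hp0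
  obtain ⟨v0, hv0⟩ := hS
  obtain ⟨hqC, hqin⟩ := h16_projC (closure (convexHull ℝ (sdom s)))
    ⟨v0, subset_closure (subset_convexHull ℝ _ hv0)⟩ isClosed_closure
    ((convex_convexHull ℝ _).closure) y
  obtain ⟨u0, hu0⟩ := hc2
  obtain ⟨hpC, hpin⟩ := h16_projC (closure (edom (fconj φ)))
    ⟨u0, subset_closure (hu0.2.trans EReal.zero_lt_top)⟩ isClosed_closure
    ((h16_convex_edom _).closure) (γ⁻¹ • x)
  set q := projC (closure (convexHull ℝ (sdom s))) y
  set p := projC (closure (edom (fconj φ))) (γ⁻¹ • x)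
  have hprox : ∀ η : ℝ, 0 ≤ η → prox (rscale (γ * η) (hautEnv s)) y = q := by
    intro η hη
    refine h16_prox_rscale _ _ (by positivity) (Or.inr (h16_haut_nonneg s)) _ _ ?_ ?_ hq0
    · rw [h16_closure_edom]; exact hqC
    · rw [h16_closure_edom]; exact hqin
  have hprox2 : prox (rscale 0 (fconj φ)) (γ⁻¹ • x) = p :=
    h16_prox_rscale _ _ le_rfl (Or.inl rfl) _ _ hpC hpin hp0
  have heq : ∀ η : ℝ, 0 ≤ η → (eta9eq φ s γ x y η ↔ η = 0) := by
    intro η hη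
    unfold eta9eq
    rw [hprox η hη, hq0, EReal.toReal_zero, mul_zero, hprox2, hp0, zero_add]
    exact EReal.coe_eq_zero
  refine ⟨(heq 0 le_rfl).2 rfl, fun η hη h => (heq η hη).1 h, ?_⟩
  have hmax : ∀ u ∈ edom (fconj φ), inner ℝ (x - γ • p) u ≤ inner ℝ (x - γ • p) p := by
    intro u hu
    have h1 := hpin u (subset_closure hu)
    have h2 : x - γ • p = γ • (γ⁻¹ • x - p) := by
      rw [smul_sub, smul_smul, mul_inv_cancel₀ hγ.ne', one_smul]
    rw [h2, inner_smul_left, inner_smul_left, conj_trivial]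
    rw [inner_sub_right] at h1
    exact mul_le_mul_of_nonneg_left (by linarith) hγ.le
  have hge := h16_persp_ge φ s p q (γ⁻¹ • (y - q)) hp0 (by
    intro v hv
    rw [inner_smul_left, conj_trivial]
    exact mul_nonpos_of_nonneg_of_nonpos (inv_pos.2 hγ).le
      (hqin v (subset_closure (subset_convexHull ℝ _ hv))))
  have hval : persp φ s (pairHG (x - γ • p) q) = ((inner ℝ (x - γ • p) p : ℝ) : EReal) := by
    apply le_antisymm
    · exact h16_persp_le φ s hφ _ p q hp0 hmax hqC hq0
    · have := hge (pairHG (x - γ • p) q)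
      change ((inner ℝ (x - γ • p) p + inner ℝ _ (q - q) : ℝ) : EReal) ≤ _ at this
      simpa using this
  apply h16_prox_eq _ _ _ (γ * inner ℝ (x - γ • p) p)
  · unfold smulE
    rw [hval, EReal.coe_mul]
  · intro z
    unfold smulE
    refine le_trans ?_ (mul_le_mul_of_nonneg_left (hge z) (EReal.coe_nonneg.2 hγ.le))
    rw [← EReal.coe_mul, EReal.coe_le_coe_iff, WithLp.prod_inner_apply]
    change γ * inner ℝ (x - γ • p) p + (inner ℝ (x - (x - γ • p)) (z.fst - (x - γ • p))
      + inner ℝ (y - q) (z.snd - q)) ≤ _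
    rw [sub_sub_cancel, inner_smul_left, inner_smul_left, conj_trivial, conj_trivial, mul_add,
      ← mul_assoc γ γ⁻¹, mul_inv_cancel₀ hγ.ne', one_mul, inner_sub_right p,
      real_inner_comm z.fst p, real_inner_comm (x - γ • p) p]
    apply le_of_eq
    ring
end

section
/- Let φ ∈ Γ₀(H) satisfy φ*(H) ⊂ (−∞,0] ∪ {+∞} and (φ*)⁻¹((−∞,0)) ≠ ∅, let s ∈ Γ₀(G) be such that S = s⁻¹((0,+∞)) ≠ ∅, let γ ∈ (0,+∞), and let (x,y) ∈ Ξ₃. Then the unique η ∈ [0,+∞) satisfying φ*( prox_{((1/γ)·s_▲(prox_{(γη)⊙s_▲} y))⊙φ*}(x/γ) ) + η = 0 equals −φ*(proj_{cl dom φ*}(x/γ)) > 0, and prox_{γ(φ▷s)}(x,y) = ( x − γ·proj_{cl dom φ*}(x/γ), prox_{(−γ·φ*(proj_{cl dom φ*}(x/γ)))·s_▲} y ). -/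
open scoped Classical

/-! ### Helper lemmas -/

theorem fconj_le_iff {E : Type*} [NormedAddCommGroup E] [InnerProductSpace ℝ E]
    (f : E → EReal) (y : E) (r : ℝ) :
    fconj f y ≤ (r : EReal) ↔ ∀ x (a : ℝ), f x ≤ (a : EReal) → inner ℝ x y - a ≤ r := by
  unfold fconj
  rw [iSup_le_iff]
  refine forall_congr' fun x => ?_
  induction hfx : f x with
  | bot =>
    constructor
    · intro h
      rw [sub_eq_add_neg, EReal.neg_bot, EReal.coe_add_top] at h
      exact absurd h (by simp)
    · intro h
      have := h (inner ℝ x y - r - 1) bot_le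
      linarith
  | top =>
    constructor
    · intro h a ha
      exact absurd ha (by simp)
    · intro _
      rw [sub_eq_add_neg, EReal.neg_top, EReal.add_bot]
      exact bot_le
  | coe c =>
    rw [← EReal.coe_sub, EReal.coe_le_coe_iff]
    constructor
    · intro h a ha
      rw [EReal.coe_le_coe_iff] at ha
      linarith
    · intro h
      exact h c le_rfl

theorem le_of_epi {c d : EReal} (h : ∀ r : ℝ, d ≤ (r : EReal) → c ≤ (r : EReal)) : c ≤ d := by
  induction d with
  | bot =>
    rw [le_bot_iff, EReal.eq_bot_iff_forall_lt]
    intro y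
    refine lt_of_le_of_lt (h (y - 1) bot_le) ?_
    rw [EReal.coe_lt_coe_iff]
    linarith
  | top => exact le_top
  | coe d => exact h d le_rfl

/-- The epigraph of a conjugate is closed. -/
theorem fconj_closed {E : Type*} [NormedAddCommGroup E] [InnerProductSpace ℝ E]
    (f : E → EReal) : IsClosed {p : E × ℝ | fconj f p.1 ≤ (p.2 : EReal)} := by
  simp only [fconj_le_iff, Set.ofPred_forall]
  refine isClosed_iInter fun x => isClosed_iInter fun a => isClosed_iInter fun _ => ?_
  exact isClosed_le (by fun_prop) (by fun_prop)

theorem fconj_convex {E : Type*} [NormedAddCommGroup E] [InnerProductSpace ℝ E]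
    (f : E → EReal) : ConvexEpi (fconj f) := by
  unfold ConvexEpi
  simp only [fconj_le_iff]
  intro p hp q hq a b ha hb hab x c hc
  have h1 := hp x c hc
  have h2 := hq x c hc
  simp only [Prod.fst_add, Prod.smul_fst, Prod.snd_add, Prod.smul_snd, inner_add_right,
    inner_smul_right, smul_eq_mul]
  have : c = a * c + b * c := by rw [← add_mul, hab, one_mul]
  nlinarith

theorem lsc_epi_closed {E : Type*} [TopologicalSpace E] (f : E → EReal)
    (hf : LowerSemicontinuous f) : IsClosed {p : E × ℝ | f p.1 ≤ (p.2 : EReal)} := by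
  have h := hf.isClosed_epigraph
  exact h.preimage (f := fun p : E × ℝ => (p.1, (p.2 : EReal)))
    (continuous_fst.prodMk (continuous_coe_real_ereal.comp continuous_snd))

/-- Separation: points below the biconjugate lie in the closed convex hull of the epigraph. -/
theorem biconj_epi {E : Type*} [NormedAddCommGroup E] [InnerProductSpace ℝ E] [CompleteSpace E]
    (f : E → EReal) (x0 : E) (r0 : ℝ) (h0 : f x0 ≤ (r0 : EReal)) (a0 : E) (b0 : ℝ)
    (hmin : fconj f a0 ≤ (b0 : EReal)) (q : E) (r : ℝ)
    (hq : fconj (fconj f) q ≤ (r : EReal)) :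
    (q, r) ∈ closure (convexHull ℝ {p : E × ℝ | f p.1 ≤ (p.2 : EReal)}) := by
  by_contra hcon
  obtain ⟨L, α, hL, hLq⟩ := geometric_hahn_banach_closed_point
    (convex_convexHull ℝ _).closure isClosed_closure hcon
  set β : ℝ := L (0, 1) with hβ
  let ℓ : StrongDual ℝ E := L.comp (ContinuousLinearMap.inl ℝ E ℝ)
  set a : E := (InnerProductSpace.toDual ℝ E).symm ℓ with ha
  have hdec : ∀ v t, L (v, t) = inner ℝ a v + t * β := by
    intro v t
    have h1 : (v, t) = (v, (0 : ℝ)) + t • ((0 : E), (1 : ℝ)) := by simp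
    have h2 : inner ℝ a v = L (v, 0) := by
      rw [ha, InnerProductSpace.toDual_symm_apply]; rfl
    rw [h1, map_add, map_smul, h2, smul_eq_mul]
  have hE : ∀ v (t : ℝ), f v ≤ (t : EReal) → inner ℝ a v + t * β < α := by
    intro v t hvt
    rw [← hdec]
    exact hL _ (subset_closure (subset_convexHull ℝ _ hvt))
  rw [hdec] at hLq
  rw [fconj_le_iff] at hq
  have hβ0 : β ≤ 0 := by
    by_contra hpos
    push Not at hpos
    have h1 := hE x0 (max r0 ((α - inner ℝ a x0) / β))
      (h0.trans (by exact_mod_cast le_max_left _ _))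
    have h2 : (α - inner ℝ a x0) / β * β ≤ max r0 ((α - inner ℝ a x0) / β) * β :=
      mul_le_mul_of_nonneg_right (le_max_right _ _) hpos.le
    rw [div_mul_cancel₀ _ hpos.ne'] at h2
    linarith
  rcases hβ0.lt_or_eq with hneg | hz
  · have h1 : fconj f ((-β)⁻¹ • a) ≤ (((-β)⁻¹ * α : ℝ) : EReal) := by
      rw [fconj_le_iff]
      intro v t hvt
      have := hE v t hvt
      rw [inner_smul_right, real_inner_comm]
      have h3 : t = (-β)⁻¹ * (t * (-β)) := by
        rw [mul_comm t, inv_mul_cancel_left₀ (by linarith)]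
      rw [h3, ← mul_sub]
      exact mul_le_mul_of_nonneg_left (by linarith) (by simpa using hneg.le)
    have h2 := hq _ _ h1
    rw [inner_smul_left, conj_trivial, ← mul_sub] at h2
    have h3 : r = (-β)⁻¹ * (r * (-β)) := by
      rw [mul_comm r, inv_mul_cancel_left₀ (by linarith)]
    rw [h3] at h2
    have := le_of_mul_le_mul_left h2 (by simpa using hneg)
    linarith
  · rw [hz] at hE hLq
    simp only [mul_zero, add_zero] at hE hLq
    have key : ∀ n : ℝ, 0 ≤ n → inner ℝ a0 q - b0 + n * (inner ℝ a q - α) ≤ r := by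
      intro n hn
      have h1 : fconj f (a0 + n • a) ≤ ((b0 + n * α : ℝ) : EReal) := by
        rw [fconj_le_iff] at hmin ⊢
        intro v t hvt
        have h2 := hmin v t hvt
        have h3 := hE v t hvt
        rw [inner_add_right, inner_smul_right, real_inner_comm a v]
        nlinarith
      have h2 := hq _ _ h1
      rw [inner_add_left, inner_smul_left] at h2
      simp only [conj_trivial] at h2
      linarith
    have hd : 0 < inner ℝ a q - α := by linarith
    have h1 := key ((|r - (inner ℝ a0 q - b0)| + 1) / (inner ℝ a q - α)) (by positivity)
    rw [div_mul_cancel₀ _ hd.ne'] at h1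
    have := le_abs_self (r - (inner ℝ a0 q - b0))
    linarith

/-- Existence of minimizers for the prox problem, in real form. -/
theorem prox_exists {E : Type*} [NormedAddCommGroup E] [InnerProductSpace ℝ E] [CompleteSpace E]
    (f : E → EReal) (x0 : E) (r0 : ℝ) (h0 : f x0 ≤ (r0 : EReal)) (a0 : E) (b0 : ℝ)
    (hmin : ∀ v (t : ℝ), f v ≤ (t : EReal) → inner ℝ a0 v - b0 ≤ t)
    (hcl : IsClosed {p : E × ℝ | f p.1 ≤ (p.2 : EReal)}) (hcv : ConvexEpi f)
    (c : ℝ) (hc : 0 < c) (x : E) :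
    ∃ (p : E) (r : ℝ), f p ≤ (r : EReal) ∧
      ∀ v (t : ℝ), f v ≤ (t : EReal) → c * r + ‖x - p‖ ^ 2 / 2 ≤ c * t + ‖x - v‖ ^ 2 / 2 := by
  let A : Set ℝ := {m | ∃ v t, f v ≤ ((t : ℝ) : EReal) ∧ m = c * t + ‖x - v‖ ^ 2 / 2}
  have hAne : A.Nonempty := ⟨_, x0, r0, h0, rfl⟩
  have hAbd : BddBelow A := by
    refine ⟨c * (inner ℝ a0 x - b0) - c ^ 2 * ‖a0‖ ^ 2 / 2, ?_⟩
    rintro m ⟨v, t, hvt, rfl⟩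
    have h1 := hmin v t hvt
    have h2 : (0 : ℝ) ≤ ‖c • a0 - (x - v)‖ ^ 2 := by positivity
    rw [norm_sub_sq_real, norm_smul, inner_smul_left, inner_sub_right, mul_pow] at h2
    simp only [conj_trivial, Real.norm_eq_abs, sq_abs] at h2
    nlinarith
  set m := sInf A with hm
  have hlow : ∀ v t, f v ≤ ((t : ℝ) : EReal) → m ≤ c * t + ‖x - v‖ ^ 2 / 2 :=
    fun v t h => csInf_le hAbd ⟨v, t, h, rfl⟩
  have hseq : ∀ n : ℕ, ∃ v t, f v ≤ ((t : ℝ) : EReal) ∧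
      c * t + ‖x - v‖ ^ 2 / 2 < m + 1 / ((n : ℝ) + 1) := by
    intro n
    obtain ⟨a, ⟨v, t, hvt, rfl⟩, hlt⟩ := exists_lt_of_csInf_lt hAne
      (show sInf A < m + 1 / ((n : ℝ) + 1) by
        have : (0 : ℝ) < 1 / ((n : ℝ) + 1) := by positivity
        linarith)
    exact ⟨v, t, hvt, hlt⟩
  choose v t hvt hlt using hseq
  have hpar : ∀ n k, ‖v n - v k‖ ^ 2 ≤ 4 * (1 / ((n : ℝ) + 1)) + 4 * (1 / ((k : ℝ) + 1)) := by
    intro n k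
    have hmid := hcv (x := (v n, t n)) (hvt n) (y := (v k, t k)) (hvt k)
      (a := (1 / 2 : ℝ)) (b := 1 / 2) (by norm_num) (by norm_num) (by norm_num)
    have h1 := hlow _ _ hmid
    simp only [Prod.fst_add, Prod.smul_fst, Prod.snd_add, Prod.smul_snd, smul_eq_mul] at h1
    have h2 := parallelogram_law_with_norm ℝ (x - v n) (x - v k)
    have h3 : x - v n - (x - v k) = -(v n - v k) := by abel
    have h4 : x - v n + (x - v k) = (2 : ℝ) • (x - ((1 / 2 : ℝ) • v n + (1 / 2 : ℝ) • v k)) := by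
      module
    rw [h3, h4, norm_neg, norm_smul] at h2
    norm_num at h2
    have h5 := hlt n
    have h6 := hlt k
    norm_num at h1 h5 h6 ⊢
    nlinarith
  have hlim1 : Filter.Tendsto (fun n : ℕ => 1 / ((n : ℝ) + 1)) Filter.atTop (nhds 0) :=
    tendsto_one_div_add_atTop_nhds_zero_nat
  have hcau : CauchySeq v := by
    rw [Metric.cauchySeq_iff']
    intro ε hε
    obtain ⟨N, hN⟩ := ((hlim1.eventually (gt_mem_nhds (show (0 : ℝ) < ε ^ 2 / 8 by positivity)))).exists_forall_of_atTop
    refine ⟨N, fun n hn => ?_⟩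
    rw [dist_eq_norm]
    have h1 := hpar n N
    have h2 := hN n hn
    have h3 := hN N le_rfl
    exact lt_of_pow_lt_pow_left₀ 2 hε.le (by linarith)
  obtain ⟨p, hp⟩ := cauchySeq_tendsto_of_complete hcau
  refine ⟨p, (m - ‖x - p‖ ^ 2 / 2) / c, ?_, ?_⟩
  · have hT : Filter.Tendsto (fun n : ℕ => (v n, (m + 1 / ((n : ℝ) + 1) - ‖x - v n‖ ^ 2 / 2) / c))
        Filter.atTop (nhds (p, (m - ‖x - p‖ ^ 2 / 2) / c)) := by
      refine hp.prodMk_nhds ?_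
      have h1 : Filter.Tendsto (fun n : ℕ => (m + 1 / ((n : ℝ) + 1) - ‖x - v n‖ ^ 2 / 2) / c)
        Filter.atTop (nhds ((m + 0 - ‖x - p‖ ^ 2 / 2) / c)) :=
        ((tendsto_const_nhds.add hlim1).sub
          (((tendsto_const_nhds.sub hp).norm.pow 2).div_const 2)).div_const c
      simpa using h1
    refine hcl.mem_of_tendsto hT (Filter.Eventually.of_forall fun n => ?_)
    refine (hvt n).trans ?_
    rw [EReal.coe_le_coe_iff, le_div_iff₀ hc]
    have := hlt n
    nlinarith
  · intro w s hw
    rw [mul_div_cancel₀ _ hc.ne']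
    have := hlow w s hw
    linarith

/-- `prox` of `c • f` really is a minimizer. -/
theorem prox_spec {E : Type*} [NormedAddCommGroup E] [InnerProductSpace ℝ E] [CompleteSpace E]
    (f : E → EReal) (x0 : E) (r0 : ℝ) (h0 : f x0 ≤ (r0 : EReal)) (a0 : E) (b0 : ℝ)
    (hmin : ∀ v (t : ℝ), f v ≤ (t : EReal) → inner ℝ a0 v - b0 ≤ t)
    (hcl : IsClosed {p : E × ℝ | f p.1 ≤ (p.2 : EReal)}) (hcv : ConvexEpi f)
    (c : ℝ) (hc : 0 < c) (x : E) :
    ∃ r : ℝ, f (prox (smulE c f) x) = (r : EReal) ∧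
      ∀ v (t : ℝ), f v ≤ (t : EReal) →
        c * r + ‖x - prox (smulE c f) x‖ ^ 2 / 2 ≤ c * t + ‖x - v‖ ^ 2 / 2 := by
  have hbot : ∀ v, f v ≠ ⊥ := by
    intro v hv
    have := hmin v (inner ℝ a0 v - b0 - 1) (by rw [hv]; exact bot_le)
    linarith
  obtain ⟨p, r, hpr, hp⟩ := prox_exists f x0 r0 h0 a0 b0 hmin hcl hcv c hc x
  have hex : ∃ p, ∀ y, smulE c f p + ((‖x - p‖ ^ 2 / 2 : ℝ) : EReal) ≤
      smulE c f y + ((‖x - y‖ ^ 2 / 2 : ℝ) : EReal) := by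
    refine ⟨p, fun y => ?_⟩
    unfold smulE
    induction hy : f y with
    | bot => exact absurd hy (hbot y)
    | top => rw [EReal.coe_mul_top_of_pos hc, EReal.top_add_coe]; exact le_top
    | coe d =>
      induction hpp : f p with
      | bot => exact absurd hpp (hbot p)
      | top => rw [hpp] at hpr; exact absurd hpr (by simp)
      | coe e =>
        rw [hpp, EReal.coe_le_coe_iff] at hpr
        have h1 := hp y d hy.le
        have h2 : c * e ≤ c * r := mul_le_mul_of_nonneg_left hpr hc.le
        norm_cast
        linarith
  have hsp := Classical.epsilon_spec hex
  change ∀ y, smulE c f (prox (smulE c f) x) + ((‖x - prox (smulE c f) x‖ ^ 2 / 2 : ℝ) : EReal) ≤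
      smulE c f y + ((‖x - y‖ ^ 2 / 2 : ℝ) : EReal) at hsp
  generalize prox (smulE c f) x = P at hsp
  unfold smulE at hsp
  induction hP : f P with
  | bot => exact absurd hP (hbot P)
  | top =>
    have h1 := hsp x0
    rw [hP, EReal.coe_mul_top_of_pos hc, EReal.top_add_coe, top_le_iff] at h1
    induction hx0 : f x0 with
    | bot => exact absurd hx0 (hbot _)
    | top => rw [hx0] at h0; exact absurd h0 (by simp)
    | coe e =>
      rw [hx0] at h1
      exact absurd h1 (by norm_cast; exact EReal.coe_ne_top _)
  | coe e =>
    refine ⟨e, rfl, fun v t hvt => ?_⟩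
    have h1 := hsp v
    rw [hP] at h1
    induction hv : f v with
    | bot => exact absurd hv (hbot v)
    | top => rw [hv] at hvt; exact absurd hvt (by simp)
    | coe d =>
      rw [hv] at h1 hvt
      rw [EReal.coe_le_coe_iff] at hvt
      norm_cast at h1
      have h2 : c * d ≤ c * t := mul_le_mul_of_nonneg_left hvt hc.le
      linarith

/-- A strong minimality inequality identifies `prox`. -/
theorem prox_eq {E : Type*} [NormedAddCommGroup E] [InnerProductSpace ℝ E]
    (f : E → EReal) (x p : E) (r : ℝ) (hr : f p = (r : EReal))
    (h : ∀ v, ((r + inner ℝ (x - p) (v - p) : ℝ) : EReal) ≤ f v) :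
    prox f x = p := by
  have hid : ∀ v : E, ‖x - v‖ ^ 2 = ‖x - p‖ ^ 2 - 2 * inner ℝ (x - p) (v - p) + ‖v - p‖ ^ 2 := by
    intro v
    rw [← norm_sub_sq_real]
    congr 2
    abel
  have hex : ∃ p, ∀ y, f p + ((‖x - p‖ ^ 2 / 2 : ℝ) : EReal) ≤
      f y + ((‖x - y‖ ^ 2 / 2 : ℝ) : EReal) := by
    refine ⟨p, fun y => ?_⟩
    refine le_trans ?_ (add_le_add_left (h y) _)
    rw [hr]
    norm_cast
    have := hid y
    have h2 : 0 ≤ ‖y - p‖ ^ 2 := by positivity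
    linarith
  have hsp := Classical.epsilon_spec hex
  change ∀ y, f (prox f x) + ((‖x - prox f x‖ ^ 2 / 2 : ℝ) : EReal) ≤
      f y + ((‖x - y‖ ^ 2 / 2 : ℝ) : EReal) at hsp
  generalize prox f x = P at hsp
  have h1 := (add_le_add_left (h P) _).trans (hsp p)
  rw [hr] at h1
  norm_cast at h1
  have h2 := hid P
  have h3 : ‖P - p‖ ^ 2 ≤ 0 := by linarith
  have h4 : ‖P - p‖ = 0 := by
    have := sq_nonneg ‖P - p‖
    exact pow_eq_zero_iff (two_ne_zero) |>.1 (le_antisymm h3 this)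
  exact sub_eq_zero.1 (norm_eq_zero.1 h4)

/-- The prox of an indicator is the projection. -/
theorem prox_ind {E : Type*} [NormedAddCommGroup E] [InnerProductSpace ℝ E]
    (f : E → EReal) (hne : (edom f).Nonempty) (x : E) :
    prox (rscale 0 f) x = projC (closure (edom f)) x := by
  unfold prox projC
  congr 1
  funext p
  simp only [rscale, if_true]
  obtain ⟨x0, hx0⟩ := hne
  have hx0' := subset_closure hx0
  apply propext
  constructor
  · intro h
    by_cases hp : p ∈ closure (edom f)
    · refine ⟨hp, fun y hy => ?_⟩
      have := h y
      rw [if_pos hp, if_pos hy, zero_add, zero_add, EReal.coe_le_coe_iff] at this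
      exact le_of_sq_le_sq (by linarith) (norm_nonneg _)
    · have := h x0
      rw [if_neg hp, if_pos hx0', zero_add, EReal.top_add_coe] at this
      exact absurd this (by simp)
  · rintro ⟨hp, h⟩ y
    rw [if_pos hp]
    by_cases hy : y ∈ closure (edom f)
    · rw [if_pos hy, zero_add, zero_add, EReal.coe_le_coe_iff]
      have := pow_le_pow_left₀ (norm_nonneg _) (h y hy) 2
      linarith
    · rw [if_neg hy, EReal.top_add_coe]
      exact le_top

theorem edom_convex {E : Type*} [AddCommGroup E] [Module ℝ E]
    (f : E → EReal) (hcv : ConvexEpi f) : Convex ℝ (edom f) := by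
  have hr : ∀ x ∈ edom f, ∃ r : ℝ, f x ≤ (r : EReal) := fun x hx =>
    ⟨_, EReal.le_coe_toReal (ne_of_lt hx)⟩
  intro p hp q hq a b ha hb hab
  obtain ⟨r, hr1⟩ := hr p hp
  obtain ⟨r', hr2⟩ := hr q hq
  have := hcv (x := (p, r)) hr1 (y := (q, r')) hr2 ha hb hab
  exact lt_of_le_of_lt this (EReal.coe_lt_top _)

theorem projC_spec {E : Type*} [NormedAddCommGroup E] [InnerProductSpace ℝ E] [CompleteSpace E]
    (C : Set E) (hC : IsClosed C) (hcv : Convex ℝ C) (hne : C.Nonempty) (x : E) :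
    projC C x ∈ C ∧ (∀ y ∈ C, ‖x - projC C x‖ ≤ ‖x - y‖) ∧
      ∀ y ∈ C, inner ℝ (x - projC C x) (y - projC C x) ≤ 0 := by
  have hb : BddBelow (Set.range fun w : C => ‖x - w‖) :=
    ⟨0, by rintro _ ⟨w, rfl⟩; exact norm_nonneg _⟩
  have : Nonempty C := hne.to_subtype
  have hex : ∃ p, p ∈ C ∧ ∀ y ∈ C, ‖x - p‖ ≤ ‖x - y‖ := by
    obtain ⟨v, hv, h⟩ := exists_norm_eq_iInf_of_complete_convex hne hC.isComplete hcv x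
    exact ⟨v, hv, fun y hy => h.le.trans (ciInf_le hb ⟨y, hy⟩)⟩
  obtain ⟨h1, h2⟩ : projC C x ∈ C ∧ ∀ y ∈ C, ‖x - projC C x‖ ≤ ‖x - y‖ :=
    Classical.epsilon_spec hex
  refine ⟨h1, h2, ?_⟩
  refine (norm_eq_iInf_iff_real_inner_le_zero hcv h1).1 ?_
  exact le_antisymm (le_ciInf fun w => h2 w w.2) (ciInf_le hb ⟨_, h1⟩)

theorem phaut_le_iff {G : Type*} (s : G → EReal) (v : G) (r : ℝ) :
    phaut s v ≤ (r : EReal) ↔ ∃ ρ : ℝ, s v = (ρ : EReal) ∧ 0 < ρ ∧ ρ ≤ r := by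
  unfold phaut
  constructor
  · intro h
    split_ifs at h with hc
    · lift s v to ℝ using ⟨hc.2.ne, (lt_trans EReal.bot_lt_zero hc.1).ne'⟩ with ρ
      exact ⟨ρ, rfl, by exact_mod_cast hc.1, by exact_mod_cast h⟩
    · exact absurd h (by simp)
  · rintro ⟨ρ, h1, h2, h3⟩
    rw [h1, if_pos ⟨by exact_mod_cast h2, EReal.coe_lt_top _⟩]
    exact_mod_cast h3

theorem prePersp_pair {H G : Type*} [NormedAddCommGroup H] [InnerProductSpace ℝ H]
    [NormedAddCommGroup G] [InnerProductSpace ℝ G]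
    (φ : H → EReal) (s : G → EReal) (u : H) (v : G) (ρ : ℝ) (hv : s v = (ρ : EReal))
    (hρ : 0 < ρ) : prePersp φ s (pairHG u v) = (ρ : EReal) * φ (ρ⁻¹ • u) := by
  have h2 : ((WithLp.equiv 2 (H × G)) (pairHG u v)).2 = v := rfl
  have h1 : ((WithLp.equiv 2 (H × G)) (pairHG u v)).1 = u := rfl
  unfold prePersp
  rw [h2, h1, hv, if_pos ⟨by exact_mod_cast hρ, EReal.coe_lt_top _⟩, EReal.toReal_coe]

theorem persp_le {H G : Type*} [NormedAddCommGroup H] [InnerProductSpace ℝ H]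
    [NormedAddCommGroup G] [InnerProductSpace ℝ G]
    (φ : H → EReal) (s : G → EReal) (w z0 : H) (a0 R : ℝ) (q : G)
    (hrec : ∀ ρ : ℝ, 0 < ρ → φ (z0 + ρ⁻¹ • w) ≤ ((a0 + ρ⁻¹ * R : ℝ) : EReal))
    (hq : (q, (0 : ℝ)) ∈ closure (convexHull ℝ {p : G × ℝ | phaut s p.1 ≤ (p.2 : EReal)})) :
    persp φ s (pairHG w q) ≤ (R : EReal) := by
  refine sSup_le ?_
  rintro _ ⟨g, hgl, hgc, hgp, rfl⟩
  have hgcl := lsc_epi_closed g hgl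
  let M : Set (G × ℝ) := {p | ∃ ρ : ℝ, 0 < ρ ∧ ρ ≤ p.2 ∧
    ∀ z (a : ℝ), φ z ≤ (a : EReal) → g (pairHG (ρ • z) p.1) ≤ ((ρ * a : ℝ) : EReal)}
  have hMc : Convex ℝ M := by
    rintro ⟨v1, r1⟩ ⟨ρ1, hρ1, hr1, h1⟩ ⟨v2, r2⟩ ⟨ρ2, hρ2, hr2, h2⟩ α β hα hβ hαβ
    refine ⟨α * ρ1 + β * ρ2, ?_, ?_, ?_⟩
    · rcases hα.lt_or_eq with h | h
      · have := mul_pos h hρ1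
        have := mul_nonneg hβ hρ2.le
        linarith
      · have : β = 1 := by linarith
        subst this
        rw [← h]; linarith
    · have h3 := mul_le_mul_of_nonneg_left hr1 hα
      have h4 := mul_le_mul_of_nonneg_left hr2 hβ
      simp only [Prod.smul_mk, Prod.mk_add_mk, smul_eq_mul]
      simp only at h3 h4
      linarith
    · intro z a hz
      have h3 := hgc (x := (pairHG (ρ1 • z) v1, ρ1 * a)) (h1 z a hz)
        (y := (pairHG (ρ2 • z) v2, ρ2 * a)) (h2 z a hz) hα hβ hαβ
      have h4 : pairHG ((α * ρ1 + β * ρ2) • z) (α • v1 + β • v2) =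
          α • pairHG (ρ1 • z) v1 + β • pairHG (ρ2 • z) v2 := by
        rw [add_smul, mul_smul, mul_smul]; rfl
      have h5 : (α * ρ1 + β * ρ2) * a = α * (ρ1 * a) + β * (ρ2 * a) := by ring
      simp only [Prod.smul_mk, Prod.mk_add_mk]
      rw [h4, h5]
      exact h3
  have hsub : {p : G × ℝ | phaut s p.1 ≤ (p.2 : EReal)} ⊆ M := by
    rintro ⟨v, r⟩ hvr
    obtain ⟨ρ, hs, hρ, hle⟩ := (phaut_le_iff s v r).1 hvr
    refine ⟨ρ, hρ, hle, fun z a hz => ?_⟩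
    refine (hgp _).trans ?_
    rw [prePersp_pair φ s _ v ρ hs hρ, inv_smul_smul₀ hρ.ne', EReal.coe_mul]
    exact mul_le_mul_of_nonneg_left hz (by exact_mod_cast hρ.le)
  have hqM : (q, (0 : ℝ)) ∈ closure M := closure_mono (convexHull_min hsub hMc) hq
  obtain ⟨m, hmM, hmlim⟩ := mem_closure_iff_seq_limit.1 hqM
  choose ρ hρ0 hρle hρg using hmM
  have hl1 : Filter.Tendsto (fun n => (m n).1) Filter.atTop (nhds q) :=
    (continuous_fst.tendsto _).comp hmlim
  have hl2 : Filter.Tendsto (fun n => (m n).2) Filter.atTop (nhds 0) :=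
    (continuous_snd.tendsto _).comp hmlim
  have hl3 : Filter.Tendsto ρ Filter.atTop (nhds 0) :=
    squeeze_zero (fun n => (hρ0 n).le) hρle hl2
  have hT : Filter.Tendsto (fun n => (pairHG (ρ n • z0 + w) (m n).1, ρ n * a0 + R))
      Filter.atTop (nhds (pairHG w q, R)) := by
    refine Filter.Tendsto.prodMk_nhds ?_ ?_
    · have h1 : Filter.Tendsto (fun n => (ρ n • z0 + w, (m n).1)) Filter.atTop
          (nhds ((0 : ℝ) • z0 + w, q)) :=
        ((hl3.smul_const z0).add_const w).prodMk_nhds hl1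
      rw [zero_smul, zero_add] at h1
      exact ((WithLp.prod_continuous_toLp 2 H G).tendsto (w, q)).comp h1
    · have h1 := (hl3.mul_const a0).add_const R
      simpa using h1
  refine hgcl.mem_of_tendsto hT (Filter.Eventually.of_forall fun n => ?_)
  have h1 := hρg n _ _ (hrec (ρ n) (hρ0 n))
  rw [smul_add, smul_inv_smul₀ (hρ0 n).ne', mul_add, mul_inv_cancel_left₀ (hρ0 n).ne'] at h1
  exact h1

theorem le_persp {H G : Type*} [NormedAddCommGroup H] [InnerProductSpace ℝ H]
    [NormedAddCommGroup G] [InnerProductSpace ℝ G]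
    (φ : H → EReal) (s : G → EReal) (p : H) (b : G) (c : ℝ)
    (h : ∀ u v (ρ : ℝ), s v = (ρ : EReal) → 0 < ρ →
      ((inner ℝ p u + inner ℝ b v + c : ℝ) : EReal) ≤ (ρ : EReal) * φ (ρ⁻¹ • u)) (u : H) (v : G) :
    ((inner ℝ p u + inner ℝ b v + c : ℝ) : EReal) ≤ persp φ s (pairHG u v) := by
  refine le_sSup ⟨fun z => ((inner ℝ p z.fst + inner ℝ b z.snd + c : ℝ) : EReal), ?_, ?_, ?_, rfl⟩
  · refine Continuous.lowerSemicontinuous (continuous_coe_real_ereal.comp ?_)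
    have h1 : Continuous (fun z : WithLp 2 (H × G) => z.fst) := WithLp.continuous_fst 2 H G
    have h2 : Continuous (fun z : WithLp 2 (H × G) => z.snd) := WithLp.continuous_snd 2 H G
    exact ((continuous_const.inner h1).add (continuous_const.inner h2)).add continuous_const
  · unfold ConvexEpi
    simp only [EReal.coe_le_coe_iff]
    intro z1 h1 z2 h2 α β hα hβ hαβ
    simp only [Set.mem_ofPred_eq, Prod.fst_add, Prod.smul_fst, Prod.snd_add, Prod.smul_snd,
      WithLp.add_fst, WithLp.add_snd, WithLp.smul_fst, WithLp.smul_snd, inner_add_right,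
      inner_smul_right, smul_eq_mul] at h1 h2 ⊢
    have h3 := mul_le_mul_of_nonneg_left h1 hα
    have h4 := mul_le_mul_of_nonneg_left h2 hβ
    have h5 : c = α * c + β * c := by rw [← add_mul, hαβ, one_mul]
    linarith
  · intro z
    by_cases hc : 0 < s z.snd ∧ s z.snd < ⊤
    · obtain ⟨ρ, hρ⟩ : ∃ ρ : ℝ, s z.snd = (ρ : EReal) :=
        ⟨_, (EReal.coe_toReal hc.2.ne (lt_trans EReal.bot_lt_zero hc.1).ne').symm⟩
      have hρ0 : 0 < ρ := by rw [hρ] at hc; exact_mod_cast hc.1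
      have h1 := prePersp_pair φ s z.fst z.snd ρ hρ hρ0
      change prePersp φ s z = _ at h1
      rw [h1]
      exact h _ _ ρ hρ hρ0
    · unfold prePersp
      exact le_of_le_of_eq le_top (if_neg hc).symm

theorem hautEnv_nonneg {G : Type*} [NormedAddCommGroup G] [InnerProductSpace ℝ G]
    (s : G → EReal) : fconj (phaut s) 0 ≤ ((0 : ℝ) : EReal) := by
  rw [fconj_le_iff]
  intro v a h
  obtain ⟨ρ, -, h1, h2⟩ := (phaut_le_iff s v a).1 h
  rw [inner_zero_right]
  linarith

theorem hautEnv_le {G : Type*} [NormedAddCommGroup G] [InnerProductSpace ℝ G]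
    (s : G → EReal) (v : G) (r : ℝ) (h : phaut s v ≤ (r : EReal)) :
    hautEnv s v ≤ (r : EReal) := by
  unfold hautEnv
  rw [fconj_le_iff]
  intro a b hab
  have := (fconj_le_iff _ _ _).1 hab v r h
  rw [real_inner_comm]
  linarith

/-- Subgradient inequality at a minimizer of the prox problem. -/
theorem prox_subgrad {E : Type*} [NormedAddCommGroup E] [InnerProductSpace ℝ E]
    (f : E → EReal) (hcv : ConvexEpi f) (c : ℝ) (y q : E) (r : ℝ)
    (hq : f q = (r : EReal))
    (h : ∀ v (t : ℝ), f v ≤ (t : EReal) → c * r + ‖y - q‖ ^ 2 / 2 ≤ c * t + ‖y - v‖ ^ 2 / 2)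
    (v : E) (t : ℝ) (hv : f v ≤ (t : EReal)) :
    c * r + inner ℝ (y - q) (v - q) ≤ c * t := by
  have key : ∀ l : ℝ, 0 < l → l ≤ 1 →
      c * r + inner ℝ (y - q) (v - q) ≤ c * t + l * (‖v - q‖ ^ 2 / 2) := by
    intro l hl hl1
    have h1 := hcv (x := (q, r)) hq.le (y := (v, t)) hv (a := 1 - l) (b := l)
      (by linarith) hl.le (by ring)
    have h2 := h _ _ h1
    simp only [Prod.smul_mk, Prod.mk_add_mk, smul_eq_mul] at h2
    have h3 : y - ((1 - l) • q + l • v) = (y - q) - l • (v - q) := by module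
    rw [h3, norm_sub_sq_real (y - q), inner_smul_right, norm_smul, mul_pow, Real.norm_eq_abs, sq_abs] at h2
    have h4 : l * (c * r + inner ℝ (y - q) (v - q)) ≤ l * (c * t + l * (‖v - q‖ ^ 2 / 2)) := by
      nlinarith
    exact le_of_mul_le_mul_left h4 hl
  by_contra hcon
  push Not at hcon
  set d := c * r + inner ℝ (y - q) (v - q) - c * t with hd
  set N := ‖v - q‖ ^ 2 / 2 with hN
  have hd0 : 0 < d := by linarith
  have hN0 : 0 ≤ N := by positivity
  have h1 := key (min 1 (d / (N + 1))) (by positivity) (min_le_left _ _)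
  have h2 : min 1 (d / (N + 1)) * N ≤ d / (N + 1) * N :=
    mul_le_mul_of_nonneg_right (min_le_right _ _) hN0
  have h3 : d / (N + 1) * N < d := by
    rw [div_mul_eq_mul_div, div_lt_iff₀ (by positivity)]
    nlinarith
  linarith

/-- Proposition 4.3(iii). -/
theorem stmt18 {H G : Type*} [NormedAddCommGroup H] [InnerProductSpace ℝ H] [CompleteSpace H]
    [NormedAddCommGroup G] [InnerProductSpace ℝ G] [CompleteSpace G]
    (φ : H → EReal) (s : G → EReal) (hφ : IsGamma0 φ)
    (hc1 : ∀ u : H, (⊥ < fconj φ u ∧ fconj φ u ≤ 0) ∨ fconj φ u = ⊤)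
    (hc2 : ∃ u : H, ⊥ < fconj φ u ∧ fconj φ u < 0)
    (hs : IsGamma0 s)
    (hS : ∃ v : G, 0 < s v ∧ s v < ⊤)
    (γ : ℝ) (hγ : 0 < γ) (x : H) (y : G) (hmem : (x, y) ∈ Xi3 φ s γ) :
    fconj φ (projC (closure (edom (fconj φ))) (γ⁻¹ • x)) < 0 ∧
    eta9eq φ s γ x y ((-(fconj φ (projC (closure (edom (fconj φ))) (γ⁻¹ • x)))).toReal) ∧
    (∀ η : ℝ, 0 ≤ η → eta9eq φ s γ x y η →
        (η : EReal) = -(fconj φ (projC (closure (edom (fconj φ))) (γ⁻¹ • x)))) ∧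
    prox (smulE γ (persp φ s)) (pairHG x y) =
      pairHG (x - γ • projC (closure (edom (fconj φ))) (γ⁻¹ • x))
        (prox (smulE (γ * (-(fconj φ (projC (closure (edom (fconj φ))) (γ⁻¹ • x)))).toReal)
          (hautEnv s)) y) := by
  obtain ⟨htq, hneg⟩ := hmem
  simp only at htq hneg
  obtain ⟨u0, hu0b, hu0n⟩ := hc2
  obtain ⟨v0, hv0p, hv0t⟩ := hS
  have hDne : (edom (fconj φ)).Nonempty := ⟨u0, hu0n.trans (by simp)⟩
  obtain ⟨hpC, hpmin, hpnor⟩ := projC_spec (closure (edom (fconj φ))) isClosed_closure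
    (edom_convex _ (fconj_convex φ)).closure hDne.closure (γ⁻¹ • x)
  have hproxind := prox_ind (fconj φ) hDne (γ⁻¹ • x)
  set p := projC (closure (edom (fconj φ))) (γ⁻¹ • x) with hp
  clear_value p
  -- the value of the conjugate at p
  obtain ⟨μ, hμ⟩ : ∃ μ : ℝ, fconj φ p = ((-μ : ℝ) : EReal) := by
    rcases hc1 p with h | h
    · refine ⟨-(fconj φ p).toReal, ?_⟩
      rw [neg_neg, EReal.coe_toReal (hneg.trans (by simp)).ne h.1.ne']
    · rw [h] at hneg; exact absurd hneg (by simp)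
  have hμ0 : 0 < μ := by
    rw [hμ] at hneg
    have : -μ < 0 := by exact_mod_cast hneg
    linarith
  have hμr : (-(fconj φ p)).toReal = μ := by
    rw [hμ, ← EReal.coe_neg, EReal.toReal_coe, neg_neg]
  rw [hμr] at htq ⊢
  -- a point of dom φ
  obtain ⟨z0, hz0⟩ := hφ.1
  obtain ⟨a0, ha0⟩ : ∃ a0 : ℝ, φ z0 ≤ (a0 : EReal) := ⟨_, EReal.le_coe_toReal hz0⟩
  have hψmin : ∀ v (t : ℝ), fconj φ v ≤ (t : EReal) → inner ℝ z0 v - a0 ≤ t :=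
    fun v t h => (fconj_le_iff _ _ _).1 h z0 a0 ha0
  -- a point of dom s^∧
  obtain ⟨σ0, hσ0⟩ : ∃ σ : ℝ, phaut s v0 ≤ (σ : EReal) := by
    refine ⟨(s v0).toReal, (phaut_le_iff _ _ _).2 ⟨(s v0).toReal, ?_, ?_, le_rfl⟩⟩
    · rw [EReal.coe_toReal hv0t.ne (lt_trans EReal.bot_lt_zero hv0p).ne']
    · exact EReal.toReal_pos hv0p hv0t.ne
  have htnn : ∀ v (t : ℝ), hautEnv s v ≤ (t : EReal) → 0 ≤ t := by
    intro v t h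
    have := (fconj_le_iff _ _ _).1 h 0 0 (hautEnv_nonneg s)
    rwa [inner_zero_left, sub_zero] at this
  have htmin : ∀ v (t : ℝ), hautEnv s v ≤ (t : EReal) → inner ℝ (0 : G) v - 0 ≤ t := by
    intro v t h
    rw [inner_zero_left, sub_zero]
    exact htnn v t h
  have htspec := fun c hc => prox_spec (hautEnv s) v0 σ0 (hautEnv_le _ _ _ hσ0) 0 0 htmin
    (fconj_closed _) (fconj_convex _) c hc y
  obtain ⟨r, hr, hqmin⟩ := htspec (γ * μ) (mul_pos hγ hμ0)
  have hr0 : r = 0 := by rw [htq] at hr; exact_mod_cast hr.symm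
  subst hr0
  have hrs : rscale (γ * μ) (hautEnv s) = smulE (γ * μ) (hautEnv s) := by
    unfold rscale smulE
    rw [if_neg (mul_pos hγ hμ0).ne']
  have hηeq : eta9eq φ s γ x y μ := by
    unfold eta9eq
    rw [hrs, htq, EReal.toReal_zero, mul_zero, hproxind, hμ]
    norm_cast
    simp
  refine ⟨hneg, hηeq, ?_, ?_⟩
  · intro η hη he
    have hgoal : η = μ → (η : EReal) = -(fconj φ p) := by
      rintro rfl
      rw [hμ, ← EReal.coe_neg, neg_neg]
    apply hgoal
    unfold eta9eq at he
    set q' := prox (rscale (γ * η) (hautEnv s)) y with hq'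
    have hξ0 : 0 ≤ (hautEnv s q').toReal := by
      apply EReal.toReal_nonneg
      apply le_of_epi
      intro r hr
      exact_mod_cast htnn _ _ hr
    rcases hξ0.lt_or_eq with hpos | hz
    · have hξ : 0 < γ⁻¹ * (hautEnv s q').toReal := mul_pos (inv_pos.2 hγ) hpos
      have hrs2 : rscale (γ⁻¹ * (hautEnv s q').toReal) (fconj φ) =
          smulE (γ⁻¹ * (hautEnv s q').toReal) (fconj φ) := by
        unfold rscale smulE
        rw [if_neg hξ.ne']
      rw [hrs2] at he
      obtain ⟨r', hr', hmin'⟩ := prox_spec (fconj φ) p (-μ) hμ.le z0 a0 hψmin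
        (fconj_closed _) (fconj_convex _) _ hξ (γ⁻¹ • x)
      rw [hr'] at he
      have he' : r' + η = 0 := by exact_mod_cast he
      have h1 := hmin' p (-μ) hμ.le
      have h2 := hpmin _ (subset_closure
        (show prox (smulE (γ⁻¹ * (hautEnv s q').toReal) (fconj φ)) (γ⁻¹ • x) ∈ edom (fconj φ) by
          unfold edom
          rw [Set.mem_ofPred_eq, hr']
          exact EReal.coe_lt_top _))
      have h3 := pow_le_pow_left₀ (norm_nonneg _) h2 2
      have h4 : r' ≤ -μ := le_of_mul_le_mul_left (by linarith) hξ
      have hημ : μ ≤ η := by linarith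
      have hη0 : 0 < γ * η := mul_pos hγ (by linarith)
      have hrs3 : rscale (γ * η) (hautEnv s) = smulE (γ * η) (hautEnv s) := by
        unfold rscale smulE
        rw [if_neg hη0.ne']
      obtain ⟨τ, hτ, hτmin⟩ := htspec (γ * η) hη0
      rw [← hrs3, ← hq'] at hτ hτmin
      rw [hτ, EReal.toReal_coe] at hpos
      have h5 := hτmin _ 0 hr.le
      have h6 := hqmin q' τ hτ.le
      by_contra hne
      have hlt : μ < η := lt_of_le_of_ne hημ (Ne.symm hne)
      have h7 : 0 < γ * (η - μ) * τ := mul_pos (mul_pos hγ (by linarith)) hpos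
      nlinarith
    · rw [← hz, mul_zero, hproxind, hμ] at he
      have : -μ + η = 0 := by exact_mod_cast he
      linarith
  · set q := prox (smulE (γ * μ) (hautEnv s)) y with hq
    clear_value q
    set w := x - γ • p with hw
    have hwn : ∀ a ∈ closure (edom (fconj φ)), inner ℝ w a ≤ inner ℝ w p := by
      intro a ha
      have h1 := hpnor a ha
      have h2 : w = γ • (γ⁻¹ • x - p) := by
        rw [hw, smul_sub, smul_inv_smul₀ hγ.ne']
      rw [h2, inner_smul_left, inner_smul_left, conj_trivial]
      rw [inner_sub_right] at h1
      exact mul_le_mul_of_nonneg_left (by linarith) hγ.le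
    have hsg := prox_subgrad (hautEnv s) (fconj_convex _) (γ * μ) y q 0 hr hqmin
    have hup : persp φ s (pairHG w q) ≤ ((inner ℝ w p : ℝ) : EReal) := by
      refine persp_le φ s w z0 a0 _ q ?_ ?_
      · intro ρ hρ
        have hb : fconj (fconj φ) (z0 + ρ⁻¹ • w) ≤ ((a0 + ρ⁻¹ * inner ℝ w p : ℝ) : EReal) := by
          rw [fconj_le_iff]
          intro a b hab
          have h1 := hψmin a b hab
          have h2 := hwn a (subset_closure (lt_of_le_of_lt hab (EReal.coe_lt_top _)))
          have h3 := mul_le_mul_of_nonneg_left h2 (inv_pos.2 hρ).le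
          rw [inner_add_right, inner_smul_right, real_inner_comm z0 a, real_inner_comm w a]
          linarith
        have h1 := biconj_epi φ z0 a0 ha0 p (-μ) hμ.le _ _ hb
        have hcv : Convex ℝ {p : H × ℝ | φ p.1 ≤ (p.2 : EReal)} := hφ.2.2.2
        rw [hcv.convexHull_eq, (lsc_epi_closed φ hφ.2.2.1).closure_eq] at h1
        exact h1
      · exact biconj_epi (phaut s) v0 σ0 hσ0 0 0 (hautEnv_nonneg s) q 0 hr.le
    have hlow : ∀ u v, ((inner ℝ p u + inner ℝ (γ⁻¹ • (y - q)) v +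
        (-inner ℝ (γ⁻¹ • (y - q)) q) : ℝ) : EReal) ≤ persp φ s (pairHG u v) := by
      intro u v
      refine le_persp φ s p _ _ ?_ u v
      intro u v ρ hsv hρ
      have h1 := hsg v ρ (hautEnv_le _ _ _ ((phaut_le_iff _ _ _).2 ⟨ρ, hsv, hρ, le_rfl⟩))
      have h2 : inner ℝ (γ⁻¹ • (y - q)) v - inner ℝ (γ⁻¹ • (y - q)) q ≤ μ * ρ := by
        rw [← inner_sub_right, inner_smul_left, conj_trivial, inv_mul_le_iff₀ hγ]
        linarith
      apply le_of_epi
      intro t ht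
      induction hφz : φ (ρ⁻¹ • u) with
      | bot => exact absurd hφz (hφ.2.1 _)
      | top =>
        rw [hφz, EReal.coe_mul_top_of_pos hρ] at ht
        exact absurd ht (by simp)
      | coe d =>
        rw [hφz, ← EReal.coe_mul, EReal.coe_le_coe_iff] at ht
        have h3 := (fconj_le_iff _ _ _).1 hμ.le (ρ⁻¹ • u) d hφz.le
        rw [inner_smul_left, conj_trivial, real_inner_comm] at h3
        have h4 := mul_le_mul_of_nonneg_left h3 hρ.le
        rw [mul_sub, mul_inv_cancel_left₀ hρ.ne'] at h4
        rw [EReal.coe_le_coe_iff]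
        linarith
    have hval : persp φ s (pairHG w q) = ((inner ℝ w p : ℝ) : EReal) := by
      refine le_antisymm hup ?_
      refine le_trans ?_ (hlow w q)
      rw [EReal.coe_le_coe_iff, real_inner_comm]
      linarith
    refine prox_eq _ _ _ (γ * inner ℝ w p) ?_ ?_
    · unfold smulE
      rw [hval, EReal.coe_mul]
    · intro z
      have h1 : z = pairHG z.fst z.snd := rfl
      have h2 := hlow z.fst z.snd
      rw [← h1] at h2
      unfold smulE
      refine le_trans ?_ (mul_le_mul_of_nonneg_left h2
        (show (0 : EReal) ≤ (γ : EReal) by exact_mod_cast hγ.le))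
      rw [← EReal.coe_mul, EReal.coe_le_coe_iff, WithLp.prod_inner_apply]
      have e1 : ((pairHG x y - pairHG w q : WithLp 2 (H × G)).ofLp).1 = γ • p := by
        change x - w = γ • p
        rw [hw]; abel
      clear_value w
      have e2 : ((pairHG x y - pairHG w q : WithLp 2 (H × G)).ofLp).2 = y - q := rfl
      have e3 : ((z - pairHG w q : WithLp 2 (H × G)).ofLp).1 = z.fst - w := rfl
      have e4 : ((z - pairHG w q : WithLp 2 (H × G)).ofLp).2 = z.snd - q := rfl
      rw [e1, e2, e3, e4, inner_smul_left, inner_smul_left, inner_smul_left, conj_trivial,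
        conj_trivial, inner_sub_right p, inner_sub_right (y - q), real_inner_comm p w, mul_add, mul_add,
        mul_neg, mul_inv_cancel_left₀ hγ.ne', mul_inv_cancel_left₀ hγ.ne']
      linarith
end
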